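/- arXiv:1704.01029 — 2 statements merged into one kernel-verified Lean document; each statement's English description precedes it below -/
import Mathlib

section
/- Let r ∈ (0,2) and m ∈ ℕ, m ≥ 1. For each N ∈ ℕ define y^{(N)}_{i₁…i_m} = N^{−m/2} for all 1 ≤ i₁, …, i_m ≤ N. Then lim_{N→∞} (∫_{[0,1]^m} |∑_{i₁,…,i_m=1}^{N} r_{i₁}(t₁)···r_{i_m}(t_m) y^{(N)}_{i₁…i_m}|^{r} dt₁···dt_m)^{1/r} = (√2 · (Γ((r+1)/2)/√π)^{1/r})^m. -/
open MeasureTheory Real Filter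

/-- The `j`-th Rademacher function, `r_j(t) = sgn(sin(2^j π t))`. -/
noncomputable def rademacher (j : ℕ) (t : ℝ) : ℝ :=
  Real.sign (Real.sin ((2 : ℝ) ^ j * Real.pi * t))

/-- `p₀ ∈ (1,2)` is the unique solution of `Γ((p₀+1)/2) = √π / 2`. -/
noncomputable def khintchineP0 : ℝ :=
  sInf {p : ℝ | 1 < p ∧ p < 2 ∧ Real.Gamma ((p + 1) / 2) = Real.sqrt Real.pi / 2}

/-- The optimal constant `A_r` in the Khintchine inequality. -/
noncomputable def khintchineA (r : ℝ) : ℝ :=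
  if r ≤ khintchineP0 then (2 : ℝ) ^ (1 / r - 1 / 2)
  else if r < 2 then
    (1 / Real.sqrt 2) * (Real.Gamma ((r + 1) / 2) / Real.sqrt Real.pi) ^ (-(1 / r))
  else 1

/-- The `ℓ_p` norm of a vector in `ℝⁿ` (for finite `p`). -/
noncomputable def lpNorm (p : ℝ) {n : ℕ} (x : Fin n → ℝ) : ℝ :=
  (∑ i, |x i| ^ p) ^ (1 / p)

/-- The `ℓ_∞` norm of a vector in `ℝⁿ`. -/
noncomputable def linfNorm {n : ℕ} (x : Fin n → ℝ) : ℝ :=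
  ⨆ i, |x i|

open ProbabilityTheory Topology

lemma measurable_rademacher (j : ℕ) : Measurable (rademacher j) := by
  have hsign : Measurable Real.sign := by
    unfold Real.sign
    exact Measurable.ite measurableSet_Iio measurable_const
      (Measurable.ite measurableSet_Ioi measurable_const measurable_const)
  unfold rademacher
  exact hsign.comp (by fun_prop)

lemma abs_rademacher_le_one (j : ℕ) (t : ℝ) : |rademacher j t| ≤ 1 := by
  unfold rademacher
  rcases Real.sign_apply_eq (Real.sin ((2 : ℝ) ^ j * Real.pi * t)) with h | h | h <;> simp [h]

lemma rademacher_succ_half (j : ℕ) (s : ℝ) : rademacher (j + 1) (s / 2) = rademacher j s := by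
  unfold rademacher
  congr 2
  ring

lemma rademacher_add_one (j : ℕ) (s : ℝ) : rademacher (j + 1) (s + 1) = rademacher (j + 1) s := by
  unfold rademacher
  congr 1
  rw [← Real.sin_add_nat_mul_two_pi ((2 : ℝ) ^ (j + 1) * Real.pi * s) (2 ^ j)]
  congr 1
  push_cast
  ring

lemma rademacher_one_half {s : ℝ} (h0 : 0 < s) (h1 : s < 1) : rademacher 1 (s / 2) = 1 := by
  unfold rademacher
  apply Real.sign_of_pos
  apply Real.sin_pos_of_pos_of_lt_pi <;> nlinarith [Real.pi_pos]

lemma rademacher_one_half_add {s : ℝ} (h0 : 0 < s) (h1 : s < 1) :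
    rademacher 1 ((s + 1) / 2) = -1 := by
  unfold rademacher
  apply Real.sign_of_neg
  rw [show (2 : ℝ) ^ 1 * Real.pi * ((s + 1) / 2) = s * Real.pi + Real.pi by ring, Real.sin_add_pi,
    neg_lt_zero]
  apply Real.sin_pos_of_pos_of_lt_pi <;> nlinarith [Real.pi_pos]

lemma intervalIntegrable_of_abs_le_one {h : ℝ → ℝ} (hm : Measurable h) (hb : ∀ t, |h t| ≤ 1)
    (a b : ℝ) : IntervalIntegrable h volume a b :=
  (intervalIntegrable_const (c := (1 : ℝ))).mono_fun hm.aestronglyMeasurable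
    (Eventually.of_forall fun t => by simpa using hb t)

lemma integral_zero_one_eq_halves {h : ℝ → ℝ} (hm : Measurable h) (hb : ∀ t, |h t| ≤ 1) :
    ∫ t in (0 : ℝ)..1, h t =
      (∫ s in (0 : ℝ)..1, h (s / 2)) / 2 + (∫ s in (0 : ℝ)..1, h ((s + 1) / 2)) / 2 := by
  have hi := intervalIntegrable_of_abs_le_one hm hb
  have e1 : ∫ s in (0 : ℝ)..1, h (s / 2) = 2 * ∫ t in (0 : ℝ)..(1 / 2), h t := by
    rw [intervalIntegral.integral_comp_div _ two_ne_zero]; simp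
  have e2 : ∫ s in (0 : ℝ)..1, h ((s + 1) / 2) = 2 * ∫ t in (1 / 2 : ℝ)..1, h t := by
    rw [intervalIntegral.integral_comp_add_right (fun x => h (x / 2)),
      intervalIntegral.integral_comp_div _ two_ne_zero]; norm_num
  rw [e1, e2, ← intervalIntegral.integral_add_adjacent_intervals (hi 0 (1 / 2)) (hi (1 / 2) 1)]
  ring

lemma integral_prod_range_rademacher (n : ℕ) (g : ℕ → ℝ → ℝ) (hg : ∀ j, Measurable (g j))
    (hb : ∀ j x, |x| ≤ 1 → |g j x| ≤ 1) :
    ∫ t in (0 : ℝ)..1, ∏ j ∈ Finset.range n, g j (rademacher (j + 1) t) =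
      ∏ j ∈ Finset.range n, (g j 1 + g j (-1)) / 2 := by
  induction n generalizing g with
  | zero => simp
  | succ n ih =>
    have hm : Measurable fun t => ∏ j ∈ Finset.range (n + 1), g j (rademacher (j + 1) t) :=
      Finset.measurable_fun_prod _ fun j _ => (hg j).comp (measurable_rademacher _)
    have hle : ∀ t, |∏ j ∈ Finset.range (n + 1), g j (rademacher (j + 1) t)| ≤ 1 := fun t => by
      rw [Finset.abs_prod]
      exact Finset.prod_le_one (fun _ _ => abs_nonneg _)
        fun j _ => hb j _ (abs_rademacher_le_one _ _)
    have hcongr : ∀ (c : ℝ) (φ : ℝ → ℝ),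
        (∀ s, 0 < s → s < 1 → rademacher 1 (φ s) = c) →
        (∀ j s, rademacher (j + 1 + 1) (φ s) = rademacher (j + 1) s) →
        ∫ s in (0 : ℝ)..1, ∏ j ∈ Finset.range (n + 1), g j (rademacher (j + 1) (φ s)) =
          g 0 c * ∏ j ∈ Finset.range n, (g (j + 1) 1 + g (j + 1) (-1)) / 2 := by
      intro c φ h1 h2
      rw [← ih (fun j => g (j + 1)) (fun j => hg _) (fun j => hb _),
        ← intervalIntegral.integral_const_mul]
      apply intervalIntegral.integral_congr_Ioo_of_le zero_le_one
      intro s hs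
      simp only [Finset.prod_range_succ', h2, zero_add, h1 s hs.1 hs.2]
      ring
    rw [integral_zero_one_eq_halves hm hle,
      hcongr 1 (fun s => s / 2) (fun s => rademacher_one_half)
        (fun j s => rademacher_succ_half _ _),
      hcongr (-1) (fun s => (s + 1) / 2) (fun s => rademacher_one_half_add)
        (fun j s => by rw [rademacher_succ_half, rademacher_add_one]),
      Finset.prod_range_succ']
    ring

/-- Lebesgue measure on the unit interval. -/
noncomputable def unitVolume : Measure ℝ := volume.restrict (Set.Icc 0 1)

instance : IsProbabilityMeasure unitVolume := ⟨by simp [unitVolume]⟩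

lemma integral_prod_rademacher (S : Finset ℕ) (g : ℕ → ℝ → ℝ) (hg : ∀ j, Measurable (g j))
    (hb : ∀ j x, |x| ≤ 1 → |g j x| ≤ 1) :
    ∫ t, ∏ j ∈ S, g j (rademacher (j + 1) t) ∂unitVolume = ∏ j ∈ S, (g j 1 + g j (-1)) / 2 := by
  have hS : S ⊆ Finset.range (S.sup id + 1) := fun j hj =>
    Finset.mem_range_succ_iff.2 (Finset.le_sup (f := id) hj)
  have h := integral_prod_range_rademacher (S.sup id + 1) (fun j => if j ∈ S then g j else 1)
    (fun j => by split_ifs <;> [exact hg j; exact measurable_const])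
    (fun j x hx => by
      split_ifs
      · exact hb j x hx
      · simp)
  rw [unitVolume, integral_Icc_eq_integral_Ioc, ← intervalIntegral.integral_of_le zero_le_one]
  convert h using 1
  · congr 1
    ext t
    rw [← Finset.prod_subset hS fun j _ hj => by simp [hj]]
    exact Finset.prod_congr rfl fun j hj => by simp [hj]
  · rw [← Finset.prod_subset hS fun j _ hj => by simp [hj]]
    exact Finset.prod_congr rfl fun j hj => by simp [hj]

lemma integral_comp_rademacher (j : ℕ) (g : ℝ → ℝ) (hg : Measurable g)
    (hb : ∀ x, |x| ≤ 1 → |g x| ≤ 1) :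
    ∫ t, g (rademacher (j + 1) t) ∂unitVolume = (g 1 + g (-1)) / 2 := by
  simpa using integral_prod_rademacher {j} (fun _ => g) (fun _ => hg) (fun _ => hb)

lemma abs_indicator_one_le_one (s : Set ℝ) (x : ℝ) : |s.indicator (1 : ℝ → ℝ) x| ≤ 1 := by
  by_cases h : x ∈ s <;> simp [h]

lemma measureReal_rademacher_preimage (j : ℕ) {s : Set ℝ} (hs : MeasurableSet s) :
    unitVolume.real (rademacher (j + 1) ⁻¹' s) =
      (s.indicator (1 : ℝ → ℝ) 1 + s.indicator (1 : ℝ → ℝ) (-1)) / 2 := by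
  rw [← integral_comp_rademacher j (s.indicator 1) (measurable_one.indicator hs)
    (fun x _ => abs_indicator_one_le_one s x),
    ← integral_indicator_one (measurable_rademacher _ hs)]
  rfl

lemma iIndepFun_rademacher : iIndepFun (fun j => rademacher (j + 1)) unitVolume := by
  rw [iIndepFun_iff_measure_inter_preimage_eq_mul]
  intro S sets hs
  classical
  set s' : ℕ → Set ℝ := fun j => if j ∈ S then sets j else Set.univ with hs'
  have hms' : ∀ j, MeasurableSet (s' j) := fun j => by
    simp only [hs']
    split_ifs with h <;> [exact hs j h; exact MeasurableSet.univ]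
  have e1 : ⋂ i ∈ S, rademacher (i + 1) ⁻¹' sets i = ⋂ i ∈ S, rademacher (i + 1) ⁻¹' s' i :=
    Set.iInter₂_congr fun i hi => by simp [hs', hi]
  have e2 : ∏ i ∈ S, unitVolume (rademacher (i + 1) ⁻¹' sets i) =
      ∏ i ∈ S, unitVolume (rademacher (i + 1) ⁻¹' s' i) :=
    Finset.prod_congr rfl fun i hi => by simp [hs', hi]
  rw [e1, e2, ← ENNReal.toReal_eq_toReal_iff' (measure_ne_top _ _)
    (ENNReal.prod_ne_top fun _ _ => measure_ne_top _ _), ENNReal.toReal_prod]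
  have h := integral_prod_rademacher S (fun j => (s' j).indicator 1)
    (fun j => measurable_one.indicator (hms' j)) (fun j x _ => abs_indicator_one_le_one _ x)
  have h3 : ∀ i, (unitVolume (rademacher (i + 1) ⁻¹' s' i)).toReal = _ := fun i =>
    measureReal_rademacher_preimage i (hms' i)
  simp_rw [h3]
  rw [← h, ← measureReal_def, ← integral_indicator_one
    (S.measurableSet_biInter fun i _ => measurable_rademacher _ (hms' i))]
  congr 1
  ext t
  by_cases ht : ∀ i ∈ S, rademacher (i + 1) t ∈ s' i
  · rw [Set.indicator_of_mem (by simpa using ht), Finset.prod_eq_one fun i hi => ?_]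
    · rfl
    · simp [ht i hi]
  · rw [Set.indicator_of_notMem (by simpa using ht)]
    push Not at ht
    obtain ⟨i, hi, hti⟩ := ht
    exact (Finset.prod_eq_zero hi (by simp [hti])).symm

lemma identDistrib_rademacher (j : ℕ) :
    IdentDistrib (rademacher (j + 1)) (rademacher (0 + 1)) unitVolume unitVolume where
  aemeasurable_fst := (measurable_rademacher _).aemeasurable
  aemeasurable_snd := (measurable_rademacher _).aemeasurable
  map_eq := by
    ext s hs
    rw [Measure.map_apply (measurable_rademacher _) hs,
      Measure.map_apply (measurable_rademacher _) hs,
      ← measureReal_eq_measureReal_iff, measureReal_rademacher_preimage j hs,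
      measureReal_rademacher_preimage 0 hs]

lemma integral_rademacher (j : ℕ) : ∫ t, rademacher (j + 1) t ∂unitVolume = 0 := by
  simpa using integral_comp_rademacher j id measurable_id (fun _ h => h)

lemma integral_rademacher_sq (j : ℕ) : ∫ t, rademacher (j + 1) t ^ 2 ∂unitVolume = 1 := by
  have h := integral_comp_rademacher j (· ^ 2) (by fun_prop) (fun x h => by simpa using h)
  norm_num at h
  exact h

lemma continuous_abs_rpow {r : ℝ} (hr : 0 ≤ r) : Continuous fun x : ℝ => |x| ^ r :=
  continuous_abs.rpow_const fun _ => Or.inr hr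

lemma abs_rpow_sub_min_le {r : ℝ} (hr0 : 0 < r) (hr2 : r < 2) {K : ℝ} (hK : 0 < K) (x : ℝ) :
    |(|x| ^ r - min (|x| ^ r) (K ^ r))| ≤ K ^ (r - 2) * x ^ 2 := by
  rcases le_total |x| K with h | h
  · rw [min_eq_left (Real.rpow_le_rpow (abs_nonneg x) h hr0.le)]
    simp only [sub_self, abs_zero]
    positivity
  · have hx : 0 < |x| := hK.trans_le h
    have hKr : 0 < K ^ r := by positivity
    rw [min_eq_right (Real.rpow_le_rpow hK.le h hr0.le),
      abs_of_nonneg (sub_nonneg.2 (Real.rpow_le_rpow hK.le h hr0.le))]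
    calc |x| ^ r - K ^ r ≤ |x| ^ (r - 2) * |x| ^ (2 : ℝ) := by
          rw [← Real.rpow_add hx]
          simp [hKr.le]
      _ ≤ K ^ (r - 2) * |x| ^ (2 : ℝ) := by
          gcongr ?_ * _
          exact Real.rpow_le_rpow_of_nonpos hK h (by linarith)
      _ = K ^ (r - 2) * x ^ 2 := by simp

lemma integrable_abs_rpow_of_integrable_sq {μ : Measure ℝ} [IsFiniteMeasure μ] {r : ℝ}
    (hr0 : 0 < r) (hr2 : r < 2) (h : Integrable (fun x => x ^ 2) μ) :
    Integrable (fun x => |x| ^ r) μ := by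
  refine (h.add (integrable_const (1 : ℝ))).mono' (continuous_abs_rpow hr0.le).aestronglyMeasurable
    (Eventually.of_forall fun x => ?_)
  have h1 := abs_rpow_sub_min_le hr0 hr2 one_pos x
  have h2 : min (|x| ^ r) ((1 : ℝ) ^ r) ≤ 1 := by simp
  have h3 := (le_abs_self _).trans h1
  rw [Real.norm_of_nonneg (by positivity)]
  simp only [Real.one_rpow, one_mul, Pi.add_apply] at *
  linarith

lemma abs_integral_sub_integral_min_le {μ : Measure ℝ} [IsFiniteMeasure μ] {r : ℝ}
    (hr0 : 0 < r) (hr2 : r < 2) {K : ℝ} (hK : 0 < K) (h : Integrable (fun x => x ^ 2) μ) :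
    |(∫ x, |x| ^ r ∂μ) - ∫ x, min (|x| ^ r) (K ^ r) ∂μ| ≤ K ^ (r - 2) * ∫ x, x ^ 2 ∂μ := by
  have hi := integrable_abs_rpow_of_integrable_sq hr0 hr2 h
  have hi' : Integrable (fun x => min (|x| ^ r) (K ^ r)) μ := hi.inf (integrable_const _)
  rw [← integral_sub hi hi', ← integral_const_mul]
  rw [← Real.norm_eq_abs]
  refine norm_integral_le_of_norm_le (h.const_mul _) (Eventually.of_forall fun x => ?_)
  exact abs_rpow_sub_min_le hr0 hr2 hK x

/-- Weak convergence with uniformly bounded second moments implies convergence of the absolute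
moments of order less than two. -/
lemma tendsto_integral_abs_rpow {ι : Type*} {l : Filter ι} {μs : ι → ProbabilityMeasure ℝ}
    {μ : ProbabilityMeasure ℝ} {r C : ℝ} (hr0 : 0 < r) (hr2 : r < 2)
    (hlim : Tendsto μs l (𝓝 μ))
    (hi : ∀ n, Integrable (fun x => x ^ 2) (μs n : Measure ℝ))
    (hC : ∀ n, ∫ x, x ^ 2 ∂(μs n : Measure ℝ) ≤ C)
    (hi' : Integrable (fun x => x ^ 2) (μ : Measure ℝ)) (hC' : ∫ x, x ^ 2 ∂(μ : Measure ℝ) ≤ C) :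
    Tendsto (fun n => ∫ x, |x| ^ r ∂(μs n : Measure ℝ)) l (𝓝 (∫ x, |x| ^ r ∂(μ : Measure ℝ))) := by
  rw [Metric.tendsto_nhds]
  intro ε hε
  have hK : Tendsto (fun K : ℝ => K ^ (r - 2) * C) atTop (𝓝 0) := by
    simpa using (tendsto_rpow_neg_atTop (sub_pos.2 hr2)).mul_const C
  obtain ⟨K, hKε, hK0⟩ := ((hK.eventually_lt_const (show 0 < ε / 3 by positivity)).and
    (eventually_gt_atTop 0)).exists
  let f : BoundedContinuousFunction ℝ ℝ := BoundedContinuousFunction.ofNormedAddCommGroup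
    (fun x => min (|x| ^ r) (K ^ r))
    ((continuous_abs_rpow hr0.le).min continuous_const) (K ^ r) fun x => by
      rw [Real.norm_of_nonneg (by positivity)]
      exact min_le_right _ _
  have hf := (ProbabilityMeasure.tendsto_iff_forall_integral_tendsto.1 hlim) f
  rw [Metric.tendsto_nhds] at hf
  filter_upwards [hf (ε / 3) (by positivity)] with n hn
  have key : ∀ ν : ProbabilityMeasure ℝ, Integrable (fun x => x ^ 2) (ν : Measure ℝ) →
      ∫ x, x ^ 2 ∂(ν : Measure ℝ) ≤ C →
      |(∫ x, |x| ^ r ∂(ν : Measure ℝ)) - ∫ x, f x ∂(ν : Measure ℝ)| < ε / 3 := fun ν h1 h2 =>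
    ((abs_integral_sub_integral_min_le hr0 hr2 hK0 h1).trans
      (mul_le_mul_of_nonneg_left h2 (by positivity))).trans_lt hKε
  have k1 := abs_lt.1 (key _ (hi n) (hC n))
  have k2 := abs_lt.1 (key _ hi' hC')
  rw [Real.dist_eq] at hn ⊢
  have k3 := abs_lt.1 hn
  rw [abs_lt]
  constructor <;> linarith

lemma integral_abs_rpow_gaussianReal {r : ℝ} (hr : 0 < r) :
    ∫ x, |x| ^ r ∂(gaussianReal 0 1) = 2 ^ (r / 2) * (Real.Gamma ((r + 1) / 2) / √π) := by
  rw [integral_gaussianReal_eq_integral_smul one_ne_zero]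
  have h : ∀ x : ℝ, gaussianPDFReal 0 1 x • |x| ^ r =
      (fun y => (√(2 * π))⁻¹ * (y ^ r * Real.exp (-(1 / 2) * y ^ (2 : ℝ)))) |x| := fun x => by
    simp only [gaussianPDFReal, smul_eq_mul, NNReal.coe_one, mul_one, sub_zero, Real.rpow_two,
      sq_abs]
    rw [show -x ^ 2 / 2 = -(1 / 2) * x ^ 2 by ring]
    ring
  simp_rw [h]
  rw [integral_comp_abs (f := fun y => (√(2 * π))⁻¹ * (y ^ r * Real.exp (-(1 / 2) * y ^ (2 : ℝ)))),
    integral_const_mul, integral_rpow_mul_exp_neg_mul_rpow two_pos (by linarith) (by norm_num),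
    Real.sqrt_mul zero_le_two]
  have h2 : (1 / 2 : ℝ) ^ (-(r + 1) / 2) = 2 ^ (r / 2) * √2 := by
    rw [one_div, Real.inv_rpow zero_le_two, ← Real.rpow_neg zero_le_two, Real.sqrt_eq_rpow,
      ← Real.rpow_add two_pos]
    congr 1
    ring
  rw [h2]
  field_simp

/-- The normalized Rademacher sum. -/
noncomputable def rademacherMean (N : ℕ) (t : ℝ) : ℝ :=
  (√N)⁻¹ * ∑ k ∈ Finset.range N, rademacher (k + 1) t

lemma measurable_rademacherMean (N : ℕ) : Measurable (rademacherMean N) :=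
  (Finset.measurable_fun_sum _ fun _ _ => measurable_rademacher _).const_mul _

lemma memLp_rademacher (j : ℕ) (p : ENNReal) : MemLp (rademacher j) p unitVolume :=
  MemLp.of_bound (measurable_rademacher j).aestronglyMeasurable 1
    (Eventually.of_forall fun t => abs_rademacher_le_one j t)

lemma memLp_rademacherMean (N : ℕ) (p : ENNReal) : MemLp (rademacherMean N) p unitVolume :=
  (memLp_finsetSum _ fun k _ => memLp_rademacher (k + 1) p).const_mul _

lemma integral_rademacherMean_sq_le (N : ℕ) :
    ∫ t, rademacherMean N t ^ 2 ∂unitVolume ≤ 1 := by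
  have hvar : ∀ k : ℕ, Var[rademacher (k + 1); unitVolume] = 1 := fun k => by
    rw [variance_of_integral_eq_zero (measurable_rademacher _).aemeasurable (integral_rademacher k),
      integral_rademacher_sq]
  have hs := IndepFun.variance_sum (s := Finset.range N)
    (fun k _ => memLp_rademacher (k + 1) 2)
    (fun i _ j _ hij => iIndepFun_rademacher.indepFun hij)
  have hmean : ∫ t, (∑ k ∈ Finset.range N, rademacher (k + 1)) t ∂unitVolume = 0 := by
    simp only [Finset.sum_apply]
    rw [integral_finsetSum _ fun k _ => (memLp_rademacher (k + 1) 1).integrable le_rfl]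
    simp [integral_rademacher]
  have hmeas : Measurable (∑ k ∈ Finset.range N, rademacher (k + 1)) :=
    Finset.sum_induction _ Measurable (fun _ _ => Measurable.add) measurable_zero
      fun k _ => measurable_rademacher (k + 1)
  rw [variance_of_integral_eq_zero hmeas.aemeasurable hmean] at hs
  simp only [hvar, Finset.sum_const, Finset.card_range, nsmul_eq_mul, mul_one,
    Finset.sum_apply] at hs
  simp only [rademacherMean, mul_pow]
  rw [integral_const_mul, hs, inv_pow, Real.sq_sqrt (Nat.cast_nonneg N)]
  exact inv_mul_le_one

lemma tendsto_integral_abs_rademacherMean_rpow {r : ℝ} (hr0 : 0 < r) (hr2 : r < 2) :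
    Tendsto (fun N => ∫ t, |rademacherMean N t| ^ r ∂unitVolume) atTop
      (𝓝 (2 ^ (r / 2) * (Real.Gamma ((r + 1) / 2) / √π))) := by
  have hclt := (tendstoInDistribution_inv_sqrt_mul_sum (P := unitVolume)
    (P' := gaussianReal 0 1) (Y := id) (X := fun j => rademacher (j + 1)) ⟨by fun_prop, by simp⟩
    (integral_rademacher 0) (integral_rademacher_sq 0) iIndepFun_rademacher
    identDistrib_rademacher).tendsto
  have hgauss : Integrable (fun x : ℝ => x ^ 2) (gaussianReal 0 1) :=
    (memLp_id_gaussianReal 2).integrable_sq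
  have hgauss' : ∫ x : ℝ, x ^ 2 ∂(gaussianReal 0 1) ≤ 1 := by
    rw [← variance_of_integral_eq_zero aemeasurable_id' integral_id_gaussianReal]
    simp [variance_fun_id_gaussianReal]
  have hm := fun N => (measurable_rademacherMean N).aemeasurable (μ := unitVolume)
  have h := tendsto_integral_abs_rpow (C := 1) hr0 hr2 hclt
    (fun N => (integrable_map_measure (by fun_prop) (hm N)).2
      (memLp_rademacherMean N 2).integrable_sq)
    (fun N => (integral_map (hm N) (by fun_prop)).trans_le (integral_rademacherMean_sq_le N))
    (by simpa using hgauss) (by simpa using hgauss')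
  simp only [ProbabilityMeasure.coe_mk, Measure.map_id, integral_abs_rpow_gaussianReal hr0] at h
  exact h.congr fun N => integral_map (hm N) (continuous_abs_rpow hr0.le).aestronglyMeasurable

lemma sum_prod_rademacher_eq (m N : ℕ) (t : Fin m → ℝ) :
    ∑ i : Fin m → Fin N, (∏ k, rademacher ((i k).1 + 1) (t k)) * ((N : ℝ) ^ (-(m : ℝ) / 2)) =
      ∏ k, rademacherMean N (t k) := by
  have hN : (N : ℝ) ^ (-(m : ℝ) / 2) = (√N)⁻¹ ^ m := by
    rw [neg_div, Real.rpow_neg N.cast_nonneg, inv_pow, Real.sqrt_eq_rpow, ← Real.rpow_mul_natCast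
      N.cast_nonneg]
    congr 2
    ring
  simp only [rademacherMean]
  rw [← Finset.sum_mul, Finset.prod_mul_distrib, Finset.prod_const, Finset.card_univ,
    Fintype.card_fin, hN, mul_comm]
  congr 1
  simp_rw [← Fin.sum_univ_eq_sum_range (fun k => rademacher (k + 1) _)]
  exact (Fintype.prod_sum fun k (i : Fin N) => rademacher (i.1 + 1) (t k)).symm

lemma restrict_Icc_pi (m : ℕ) :
    (volume : Measure (Fin m → ℝ)).restrict (Set.Icc 0 1) = Measure.pi fun _ => unitVolume := by
  rw [← Set.pi_univ_Icc, volume_pi, Measure.restrict_pi_pi]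
  rfl

/-- For the arrays `y^{(N)}_{i₁…i_m} = N^{-m/2}`, the `L_r` norms of the multiple Rademacher
sums converge to `(√2 (Γ((r+1)/2)/√π)^{1/r})^m`. -/
theorem multiple_rademacher_clt_limit (r : ℝ) (hr0 : 0 < r) (hr2 : r < 2)
    (m : ℕ) (hm : 1 ≤ m) :
    Tendsto (fun N : ℕ =>
        (∫ t : Fin m → ℝ in Set.Icc 0 1,
          |∑ i : Fin m → Fin N,
            (∏ k, rademacher ((i k).1 + 1) (t k)) * ((N : ℝ) ^ (-(m : ℝ) / 2))| ^ r) ^ (1 / r))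
      atTop
      (nhds ((Real.sqrt 2 * (Real.Gamma ((r + 1) / 2) / Real.sqrt Real.pi) ^ (1 / r)) ^ m)) := by
  have hint : ∀ N : ℕ, (∫ t : Fin m → ℝ in Set.Icc 0 1,
      |∑ i : Fin m → Fin N,
        (∏ k, rademacher ((i k).1 + 1) (t k)) * ((N : ℝ) ^ (-(m : ℝ) / 2))| ^ r) ^ (1 / r) =
      ((∫ t, |rademacherMean N t| ^ r ∂unitVolume) ^ (1 / r)) ^ m := fun N => by
    simp_rw [sum_prod_rademacher_eq m N, Finset.abs_prod,
      ← Real.finsetProd_rpow _ _ fun _ _ => abs_nonneg _]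
    rw [restrict_Icc_pi, integral_fintype_prod_eq_pow (fun x => |rademacherMean N x| ^ r),
      Fintype.card_fin, Real.rpow_pow_comm (integral_nonneg fun _ => by positivity)]
  have hΓ : 0 < Real.Gamma ((r + 1) / 2) := Real.Gamma_pos_of_pos (by linarith)
  have hlim : √2 * (Real.Gamma ((r + 1) / 2) / √π) ^ (1 / r) =
      (2 ^ (r / 2) * (Real.Gamma ((r + 1) / 2) / √π)) ^ (1 / r) := by
    rw [Real.mul_rpow (by positivity) (by positivity), ← Real.rpow_mul zero_le_two,
      Real.sqrt_eq_rpow]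
    congr 2
    field_simp
  simp_rw [hint, hlim]
  exact ((tendsto_integral_abs_rademacherMean_rpow hr0 hr2).rpow_const
    (Or.inr (by positivity))).pow m
end

section
/- Multilinear mixed (ℓ_{p/(p−1)}, ℓ₂)-Littlewood inequality: let M ≥ 3 be an integer and p ∈ [2, ∞) a real number. For every n ∈ ℕ and every M-linear form T : ℝⁿ × ℝⁿ × ⋯ × ℝⁿ → ℝ one has (∑_{i₁=1}^{n} (∑_{i₂,…,i_M=1}^{n} |T(e_{i₁},…,e_{i_M})|²)^{(1/2)·(p/(p−1))})^{(p−1)/p} ≤ (A_{p/(p−1)})^{M−1} · ‖T‖, where ‖T‖ := sup{|T(x^{(1)},…,x^{(M)})| : ‖x^{(1)}‖_{ℓ_p} ≤ 1 and ‖x^{(k)}‖_{ℓ_∞} ≤ 1 for k = 2,…,M}. -/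
open MeasureTheory Real Filter

/-- The norm of an `(m+1)`-linear form on `ℝᴺ × (ℝⁿ)^m` (encoded as a linear map into
`m`-multilinear maps): `sup{|T(x, y₁, …, y_m)| : ‖x‖_{ℓ_p} ≤ 1, ‖y_k‖_{ℓ_∞} ≤ 1}`. -/
noncomputable def multiOpNorm (p : ℝ) {N n m : ℕ}
    (T : (Fin N → ℝ) →ₗ[ℝ] MultilinearMap ℝ (fun _ : Fin m => (Fin n → ℝ)) ℝ) : ℝ :=
  sSup {c : ℝ | ∃ (x : Fin N → ℝ) (y : Fin m → (Fin n → ℝ)),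
    lpNorm p x ≤ 1 ∧ (∀ k, linfNorm (y k) ≤ 1) ∧ c = |T x y|}

namespace Khintchine

section

/-- The average of `f (x + ∑ ε_k v_k)` over all choices of signs `ε_k`. -/
noncomputable def radAvg {E : Type*} [AddCommGroup E] (f : E → ℝ) : List E → E → ℝ
  | [], x => f x
  | v :: l, x => (radAvg f l (x + v) + radAvg f l (x - v)) / 2

section

variable {E F : Type*} [AddCommGroup E] [AddCommGroup F]

theorem radAvg_mono {f g : E → ℝ} (h : ∀ x, f x ≤ g x) (l : List E) (x : E) :
    radAvg f l x ≤ radAvg g l x := by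
  induction l generalizing x with
  | nil => exact h x
  | cons v l ih => simp only [radAvg]; linarith [ih (x + v), ih (x - v)]

theorem radAvg_add (f g : E → ℝ) (l : List E) (x : E) :
    radAvg (fun y => f y + g y) l x = radAvg f l x + radAvg g l x := by
  induction l generalizing x with
  | nil => rfl
  | cons v l ih => simp only [radAvg, ih]; ring

theorem radAvg_const_mul (c : ℝ) (f : E → ℝ) (l : List E) (x : E) :
    radAvg (fun y => c * f y) l x = c * radAvg f l x := by
  induction l generalizing x with
  | nil => rfl
  | cons v l ih => simp only [radAvg, ih]; ring

theorem radAvg_const (c : ℝ) (l : List E) (x : E) : radAvg (fun _ => c) l x = c := by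
  induction l generalizing x with
  | nil => rfl
  | cons v l ih => simp only [radAvg, ih]; ring

theorem radAvg_finset_sum {ι : Type*} (s : Finset ι) (f : ι → E → ℝ) (l : List E) (x : E) :
    radAvg (fun y => ∑ i ∈ s, f i y) l x = ∑ i ∈ s, radAvg (f i) l x := by
  induction l generalizing x with
  | nil => rfl
  | cons v l ih => simp only [radAvg, ih, ← Finset.sum_add_distrib, Finset.sum_div]

theorem radAvg_comp (φ : E →+ F) (f : F → ℝ) (l : List E) (x : E) :
    radAvg (fun y => f (φ y)) l x = radAvg f (l.map φ) (φ x) := by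
  induction l generalizing x with
  | nil => rfl
  | cons v l ih => simp only [radAvg, ih, List.map_cons, map_add, map_sub]

theorem radAvg_perm (f : E → ℝ) {l l' : List E} (h : l.Perm l') (x : E) :
    radAvg f l x = radAvg f l' x := by
  induction h generalizing x with
  | nil => rfl
  | cons v _ ih => simp only [radAvg, ih]
  | swap v w l =>
    simp only [radAvg]
    rw [add_right_comm x w v, show x + w - v = x - v + w by abel,
      show x - w + v = x + v - w by abel, show x - w - v = x - v - w by abel]
    ring
  | trans _ _ ih₁ ih₂ => rw [ih₁, ih₂]

theorem radAvg_neg {f : E → ℝ} (hf : ∀ x, f (-x) = f x) (l : List E) (x : E) :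
    radAvg f l (-x) = radAvg f l x := by
  induction l generalizing x with
  | nil => exact hf x
  | cons v l ih =>
    simp only [radAvg]
    rw [← ih (-x + v), ← ih (-x - v), show -(-x + v) = x - v by abel,
      show -(-x - v) = x + v by abel]
    ring

theorem radAvg_cons_zero {f : E → ℝ} (hf : ∀ x, f (-x) = f x) (v : E) (l : List E) :
    radAvg f (v :: l) 0 = radAvg f l v := by
  simp only [radAvg, zero_add, zero_sub, radAvg_neg hf]; ring

/-- Two signs may be regrouped into the sum and the difference of their coefficients. -/
theorem radAvg_cons_cons (f : E → ℝ) (v w : E) (l : List E) (x : E) :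
    radAvg f (v :: w :: l) x
      = (radAvg f ((v + w) :: l) x + radAvg f ((v - w) :: l) x) / 2 := by
  simp only [radAvg]
  rw [show x + v + w = x + (v + w) by abel, show x + v - w = x + (v - w) by abel,
    show x - v + w = x - (v - w) by abel, show x - v - w = x - (v + w) by abel]
  ring

theorem exists_signs_radAvg_le (f : E → ℝ) {n : ℕ} (v : Fin n → E) (x : E) :
    ∃ ε : Fin n → ℤ, (∀ i, ε i = 1 ∨ ε i = -1) ∧
      radAvg f (List.ofFn v) x ≤ f (x + ∑ i, ε i • v i) := by
  induction n generalizing x with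
  | zero => exact ⟨Fin.elim0, fun i => i.elim0, by simp [radAvg]⟩
  | succ n ih =>
    simp only [List.ofFn_succ, radAvg]
    obtain ⟨ε₁, h₁, h₁'⟩ := ih (fun i => v i.succ) (x + v 0)
    obtain ⟨ε₂, h₂, h₂'⟩ := ih (fun i => v i.succ) (x - v 0)
    rcases le_total (radAvg f (List.ofFn fun i => v i.succ) (x + v 0))
      (radAvg f (List.ofFn fun i => v i.succ) (x - v 0)) with h | h
    · refine ⟨Fin.cons (-1) ε₂, fun i => ?_, ?_⟩
      · refine Fin.cases (Or.inr rfl) (fun j => ?_) i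
        simpa using h₂ j
      · rw [Fin.sum_univ_succ]
        simp only [Fin.cons_zero, Fin.cons_succ, neg_smul, one_smul]
        rw [← add_assoc, ← sub_eq_add_neg]
        linarith
    · refine ⟨Fin.cons 1 ε₁, fun i => ?_, ?_⟩
      · refine Fin.cases (Or.inl rfl) (fun j => ?_) i
        simpa using h₁ j
      · rw [Fin.sum_univ_succ]
        simp only [Fin.cons_zero, Fin.cons_succ, one_smul]
        rw [← add_assoc]
        linarith

end

/-- The `p`-th absolute moment of `x + ∑ ε_k a_k`. -/
noncomputable def radMoment (p : ℝ) (l : List ℝ) (x : ℝ) : ℝ := radAvg (fun s => |s| ^ p) l x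

/-- The sum of the squares of a list. -/
noncomputable def sumSq (l : List ℝ) : ℝ := (l.map (· ^ 2)).sum

@[simp] theorem sumSq_nil : sumSq [] = 0 := rfl

@[simp] theorem sumSq_cons (a : ℝ) (l : List ℝ) : sumSq (a :: l) = a ^ 2 + sumSq l := by
  simp [sumSq]

theorem sumSq_nonneg (l : List ℝ) : 0 ≤ sumSq l := by
  induction l with
  | nil => simp
  | cons a l ih => simp; positivity

theorem sumSq_perm {l l' : List ℝ} (h : l.Perm l') : sumSq l = sumSq l' :=
  (h.map _).sum_eq

theorem sumSq_smul (c : ℝ) (l : List ℝ) : sumSq (l.map (c * ·)) = c ^ 2 * sumSq l := by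
  induction l with
  | nil => simp
  | cons a l ih => simp only [List.map_cons, sumSq_cons, ih]; ring

theorem radMoment_nonneg (p : ℝ) (l : List ℝ) (x : ℝ) : 0 ≤ radMoment p l x := by
  have := radAvg_mono (f := fun _ : ℝ => (0 : ℝ)) (g := fun s => |s| ^ p)
    (fun s => by positivity) l x
  rwa [radAvg_const] at this

theorem radMoment_smul (p c : ℝ) (l : List ℝ) (x : ℝ) :
    radMoment p (l.map (c * ·)) (c * x) = |c| ^ p * radMoment p l x := by
  have := radAvg_comp (AddMonoidHom.mulLeft c) (fun s : ℝ => |s| ^ p) l x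
  simp only [AddMonoidHom.coe_mulLeft] at this
  rw [radMoment, ← this, radMoment, ← radAvg_const_mul]
  congr 1
  ext y
  rw [abs_mul, mul_rpow (abs_nonneg _) (abs_nonneg _)]

theorem radMoment_cons_zero (p a : ℝ) (l : List ℝ) :
    radMoment p (a :: l) 0 = radMoment p l a :=
  radAvg_cons_zero (fun x => by simp) a l

theorem radAvg_sq (l : List ℝ) (x : ℝ) :
    radAvg (fun s : ℝ => s ^ 2) l x = x ^ 2 + sumSq l := by
  induction l generalizing x with
  | nil => simp [radAvg]
  | cons a l ih => simp only [radAvg, ih, sumSq_cons]; ring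

/-- `cos` is an eigenfunction of the Rademacher averages. -/
theorem radAvg_cos (t : ℝ) (l : List ℝ) (x : ℝ) :
    radAvg (fun s => cos (s * t)) l x = cos (x * t) * (l.map fun a => cos (a * t)).prod := by
  induction l generalizing x with
  | nil => simp [radAvg]
  | cons a l ih =>
    simp only [radAvg, ih, List.map_cons, List.prod_cons]
    rw [add_mul, sub_mul, cos_add, cos_sub]; ring

end

section

/-- A modification of `(1 + x) ^ (p / 2)` on `[0, 1]`, making its graph symmetric about the
point with abscissa `1`. -/
noncomputable def symPow (p x : ℝ) : ℝ :=
  if 1 ≤ x then (1 + x) ^ (p / 2) else 2 * 2 ^ (p / 2) - (3 - x) ^ (p / 2)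

theorem symPow_of_le_one {p x : ℝ} (hx : x ≤ 1) :
    symPow p x = 2 * 2 ^ (p / 2) - (3 - x) ^ (p / 2) := by
  unfold symPow
  split_ifs with h
  · obtain rfl : x = 1 := le_antisymm hx h
    norm_num; ring
  · rfl

theorem symPow_of_one_le {p x : ℝ} (hx : 1 ≤ x) : symPow p x = (1 + x) ^ (p / 2) := if_pos hx

theorem rpow_le_of_mem_segment {q a b t : ℝ} (hq0 : 0 ≤ q) (hq1 : q ≤ 1) (ha : 0 ≤ a) (hb : 0 ≤ b)
    (ht0 : 0 ≤ t) (ht1 : t ≤ 1) :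
    (1 - t) * a ^ q + t * b ^ q ≤ ((1 - t) * a + t * b) ^ q :=
  (Real.concaveOn_rpow hq0 hq1).2 ha hb (by linarith) ht0 (by ring)

theorem rpow_add_rpow_le {q u h : ℝ} (hq0 : 0 ≤ q) (hq1 : q ≤ 1) (h1 : 0 ≤ u + h) (h2 : 0 ≤ u - h) :
    (u + h) ^ q + (u - h) ^ q ≤ 2 * u ^ q := by
  have := rpow_le_of_mem_segment hq0 hq1 h1 h2 (t := 1 / 2) (by norm_num) (by norm_num)
  rw [show (1 - 1 / 2) * (u + h) + 1 / 2 * (u - h) = u by ring] at this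
  linarith

theorem le_symPow {p x : ℝ} (hp0 : 0 ≤ p) (hp2 : p ≤ 2) (hx : 0 ≤ x) :
    (1 + x) ^ (p / 2) ≤ symPow p x := by
  rcases le_total 1 x with h | h
  · rw [symPow_of_one_le h]
  · rw [symPow_of_le_one h]
    have := rpow_add_rpow_le (q := p / 2) (u := 2) (h := x - 1) (by linarith) (by linarith)
      (by linarith) (by linarith)
    rw [show 2 + (x - 1) = 1 + x by ring, show 2 - (x - 1) = 3 - x by ring] at this
    linarith

theorem two_symPow_le_aux {p x h : ℝ} (hp0 : 0 ≤ p) (hp2 : p ≤ 2) (hx1 : x ≤ 1)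
    (hh : 0 ≤ h) (hhx : h ≤ x) : 2 * symPow p x ≤ symPow p (x + h) + symPow p (x - h) := by
  have hq0 : 0 ≤ p / 2 := by linarith
  have hq1 : p / 2 ≤ 1 := by linarith
  rw [symPow_of_le_one hx1, symPow_of_le_one (by linarith : x - h ≤ 1)]
  rcases le_total (x + h) 1 with h1 | h1
  · rw [symPow_of_le_one h1]
    have := rpow_add_rpow_le (q := p / 2) (u := 3 - x) (h := h) hq0 hq1 (by linarith) (by linarith)
    rw [show 3 - x + h = 3 - (x - h) by ring, show 3 - x - h = 3 - (x + h) by ring] at this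
    linarith
  · rw [symPow_of_one_le h1]
    rcases (show (1 : ℝ) - x + h = 0 ∨ 0 < 1 - x + h by
      rcases (show 0 ≤ 1 - x + h by linarith).eq_or_lt with h0 | h0
      · exact Or.inl h0.symm
      · exact Or.inr h0) with h0 | h0
    · obtain rfl : h = 0 := by linarith
      obtain rfl : x = 1 := by linarith
      norm_num
      linarith
    · have key : ∀ t : ℝ, 0 ≤ t → t ≤ 1 →
          (1 - t) * 2 ^ (p / 2) + t * (3 - (x - h)) ^ (p / 2)
            ≤ ((1 - t) * 2 + t * (3 - (x - h))) ^ (p / 2) :=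
        fun t => rpow_le_of_mem_segment hq0 hq1 (by norm_num) (by linarith)
      have k1 := key ((x + h - 1) / (1 - x + h)) (by apply div_nonneg <;> linarith)
        (by rw [div_le_one h0]; linarith)
      have k2 := key ((1 - x) / (1 - x + h)) (by apply div_nonneg <;> linarith)
        (by rw [div_le_one h0]; linarith)
      rw [show (1 - (x + h - 1) / (1 - x + h)) * 2 + (x + h - 1) / (1 - x + h) * (3 - (x - h))
        = 1 + (x + h) by field_simp; ring] at k1
      rw [show (1 - (1 - x) / (1 - x + h)) * 2 + (1 - x) / (1 - x + h) * (3 - (x - h))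
        = 3 - x by field_simp; ring] at k2
      have e : (x + h - 1) / (1 - x + h) = 1 - 2 * ((1 - x) / (1 - x + h)) := by
        field_simp; ring
      rw [e] at k1
      linarith

theorem two_symPow_le {p x h : ℝ} (hp0 : 0 ≤ p) (hp2 : p ≤ 2) (hx1 : x ≤ 1) (hh : |h| ≤ x) :
    2 * symPow p x ≤ symPow p (x + h) + symPow p (x - h) := by
  rcases le_total 0 h with h0 | h0
  · exact two_symPow_le_aux hp0 hp2 hx1 h0 (by rwa [abs_of_nonneg h0] at hh)
  · have := two_symPow_le_aux hp0 hp2 hx1 (h := -h) (by linarith)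
      (by rwa [abs_of_nonpos h0] at hh)
    rw [sub_neg_eq_add, ← sub_eq_add_neg] at this
    linarith

section Reduction

variable {p C : ℝ}

theorem symPow_le_radMoment_of_le_one (hp0 : 0 ≤ p) (hp2 : p ≤ 2) (hC : 0 ≤ C)
    (hbase : ∀ a : ℝ, a ^ 2 ≤ 1 → C * symPow p (a ^ 2) ≤ radMoment p [a] 1) {n : ℕ}
    (ih : ∀ l : List ℝ, l.length < n → C * symPow p (sumSq l) ≤ radMoment p l 1)
    (l : List ℝ) (hl : l.length = n) (h1 : sumSq l ≤ 1) :
    C * symPow p (sumSq l) ≤ radMoment p l 1 := by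
  match l, hl, h1 with
  | [], _, _ =>
    have := hbase 0 (by norm_num)
    simpa [radMoment, radAvg] using this
  | [a], _, h1 => simpa using hbase a (by simpa using h1)
  | a :: b :: l', hl, h1 =>
    simp only [List.length_cons] at hl
    have e1 := ih ((a + b) :: l') (by simp only [List.length_cons]; omega)
    have e2 := ih ((a - b) :: l') (by simp only [List.length_cons]; omega)
    simp only [sumSq_cons] at e1 e2 h1 ⊢
    have hs := sumSq_nonneg l'
    have := two_symPow_le (h := 2 * a * b) hp0 hp2 h1 (by
      rw [abs_le]; constructor <;> nlinarith [sq_nonneg (a - b), sq_nonneg (a + b)])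
    rw [show a ^ 2 + (b ^ 2 + sumSq l') + 2 * a * b = (a + b) ^ 2 + sumSq l' by ring,
      show a ^ 2 + (b ^ 2 + sumSq l') - 2 * a * b = (a - b) ^ 2 + sumSq l' by ring] at this
    have hr : radMoment p (a :: b :: l') 1
      = (radMoment p ((a + b) :: l') 1 + radMoment p ((a - b) :: l') 1) / 2 :=
      radAvg_cons_cons _ _ _ _ _
    rw [hr]
    nlinarith [mul_le_mul_of_nonneg_left this hC]

/-- If `|b|` dominates, the moment inequality follows from its normalised strengthened form. -/
theorem rpow_sumSq_le_radMoment_cons (hp0 : 0 ≤ p) (hp2 : p ≤ 2) (hC : 0 ≤ C)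
    {b : ℝ} (hb : b ≠ 0) (l : List ℝ)
    (h : C * symPow p (sumSq (l.map (b⁻¹ * ·))) ≤ radMoment p (l.map (b⁻¹ * ·)) 1) :
    C * (sumSq (b :: l)) ^ (p / 2) ≤ radMoment p (b :: l) 0 := by
  rw [radMoment_cons_zero]
  have e : (l.map (b⁻¹ * ·)).map (b * ·) = l := by
    rw [List.map_map]; convert List.map_id l using 2; ext x; simp [hb]
  have h2 := radMoment_smul p b (l.map (b⁻¹ * ·)) 1
  rw [e, mul_one] at h2
  rw [h2]
  have hs := sumSq_nonneg l
  have h3 := le_symPow hp0 hp2 (sumSq_nonneg (l.map (b⁻¹ * ·)))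
  rw [sumSq_smul] at h3 h
  have hb2 : 0 < b ^ 2 := by positivity
  have h4 : (sumSq (b :: l)) ^ (p / 2) = |b| ^ p * (1 + b⁻¹ ^ 2 * sumSq l) ^ (p / 2) := by
    have : |b| ^ p = (b ^ 2) ^ (p / 2) := by
      rw [← sq_abs, ← rpow_natCast_mul (abs_nonneg b)]; congr 1; push_cast; ring
    rw [this, ← mul_rpow hb2.le (by positivity), sumSq_cons]
    congr 1; field_simp
  rw [h4]
  have hbp : 0 ≤ |b| ^ p := by positivity
  calc C * (|b| ^ p * (1 + b⁻¹ ^ 2 * sumSq l) ^ (p / 2))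
      = |b| ^ p * (C * (1 + b⁻¹ ^ 2 * sumSq l) ^ (p / 2)) := by ring
    _ ≤ |b| ^ p * (C * symPow p (b⁻¹ ^ 2 * sumSq l)) := by gcongr
    _ ≤ _ := by gcongr

theorem symPow_le_radMoment (hp0 : 0 ≤ p) (hp2 : p ≤ 2) (hC : 0 ≤ C)
    (hbase : ∀ a : ℝ, a ^ 2 ≤ 1 → C * symPow p (a ^ 2) ≤ radMoment p [a] 1)
    (hbal : ∀ l : List ℝ, (∀ a ∈ l, 2 * a ^ 2 ≤ sumSq l) →
      C * (sumSq l) ^ (p / 2) ≤ radMoment p l 0) (l : List ℝ) :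
    C * symPow p (sumSq l) ≤ radMoment p l 1 := by
  induction hn : l.length using Nat.strong_induction_on generalizing l with
  | _ n ih =>
  have step := symPow_le_radMoment_of_le_one hp0 hp2 hC hbase (n := n)
    (fun l hl => ih _ hl l rfl)
  rcases le_total (sumSq l) 1 with h1 | h1
  · exact step l hn h1
  rw [symPow_of_one_le h1]
  have hcons : sumSq (1 :: l) = 1 + sumSq l := by simp
  rw [← radMoment_cons_zero, ← hcons]
  by_cases hall : ∀ a ∈ (1 : ℝ) :: l, 2 * a ^ 2 ≤ sumSq (1 :: l)
  · exact hbal _ hall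
  push Not at hall
  obtain ⟨b, hb, hb2⟩ := hall
  rw [hcons] at hb2
  have hbl : b ∈ l := by
    rcases List.mem_cons.1 hb with rfl | h
    · linarith
    · exact h
  have hb0 : b ≠ 0 := by rintro rfl; norm_num at hb2; linarith
  have hp : (1 :: l).Perm (b :: (1 :: l.erase b)) :=
    ((List.perm_cons_erase hbl).cons 1).trans (List.Perm.swap _ _ _)
  rw [sumSq_perm hp, show radMoment p (1 :: l) 0 = radMoment p (b :: (1 :: l.erase b)) 0 from
    radAvg_perm _ hp 0]
  refine rpow_sumSq_le_radMoment_cons hp0 hp2 hC hb0 _ (step _ ?_ ?_)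
  · have := List.length_erase_add_one hbl
    simp only [List.length_map, List.length_cons]; omega
  · have h5 := sumSq_perm hp
    rw [hcons, sumSq_cons] at h5
    rw [sumSq_smul]
    have : 0 < b ^ 2 := by positivity
    rw [inv_pow, inv_mul_le_iff₀ this]
    linarith

/-- A lower moment inequality for all coefficients follows from the one for balanced coefficients
together with a two-point inequality. -/
theorem rpow_sumSq_le_radMoment (hp0 : 0 < p) (hp2 : p ≤ 2) (hC : 0 ≤ C)
    (hbase : ∀ a : ℝ, a ^ 2 ≤ 1 → C * symPow p (a ^ 2) ≤ radMoment p [a] 1)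
    (hbal : ∀ l : List ℝ, (∀ a ∈ l, 2 * a ^ 2 ≤ sumSq l) →
      C * (sumSq l) ^ (p / 2) ≤ radMoment p l 0) (l : List ℝ) :
    C * (sumSq l) ^ (p / 2) ≤ radMoment p l 0 := by
  induction l with
  | nil => simpa [radMoment, radAvg] using hbal []
  | cons a l ih =>
    by_cases ha : a = 0
    · subst ha
      rw [radMoment_cons_zero]
      simpa using ih
    · exact rpow_sumSq_le_radMoment_cons hp0.le hp2 hC ha l
        (symPow_le_radMoment hp0.le hp2 hC hbase hbal _)

end Reduction

end

theorem log_le_half_sub_inv {x : ℝ} (hx : 1 ≤ x) : log x ≤ (x - x⁻¹) / 2 := by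
  rw [← Real.sinh_log (by linarith)]
  exact Real.self_le_sinh_iff.2 (log_nonneg hx)

theorem log_le_two_mul_div {x : ℝ} (hx0 : 0 < x) (hx1 : x ≤ 1) :
    log x ≤ 2 * (x - 1) / (x + 1) := by
  have h := Real.le_log_one_add_of_nonneg (x := x⁻¹ - 1)
    (by rw [sub_nonneg]; exact (one_le_inv₀ hx0).2 hx1)
  rw [show 1 + (x⁻¹ - 1) = x⁻¹ by ring, log_inv] at h
  have e : 2 * (x⁻¹ - 1) / (x⁻¹ - 1 + 2) = - (2 * (x - 1) / (x + 1)) := by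
    rw [show x⁻¹ - 1 + 2 = (1 + x) / x by field_simp; ring]
    field_simp
    ring
  linarith

theorem sq_mul_le_rpow {x p : ℝ} (hx : 0 < x) : x ^ 2 * (1 + (p - 2) * log x) ≤ x ^ p := by
  have : x ^ p = x ^ 2 * exp ((p - 2) * log x) := by
    rw [rpow_def_of_pos hx, ← Real.rpow_natCast x 2, rpow_def_of_pos hx, ← exp_add]
    congr 1; push_cast; ring
  rw [this]
  have := add_one_le_exp ((p - 2) * log x)
  gcongr
  linarith

theorem entropy_le_zero {b : ℝ} (hb0 : 0 < b) (hb1 : b ≤ 1 / 2) :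
    (1 - b) ^ 2 * log (1 - b) + b ^ 2 * log b
      + (1 / 2 + (1 - b) * b) * log (1 + 2 * (1 - b) * b) ≤ 0 := by
  have h1 : log (1 - b) ≤ 2 * (1 - b - 1) / (1 - b + 1) :=
    log_le_two_mul_div (by linarith) (by linarith)
  have h2 : log (2 * b) ≤ 2 * (2 * b - 1) / (2 * b + 1) :=
    log_le_two_mul_div (by linarith) (by linarith)
  rw [log_mul (by norm_num) hb0.ne'] at h2
  have hz : 0 ≤ (1 - b) * b := mul_nonneg (by linarith) hb0.le
  have h3 : log (1 + 2 * (1 - b) * b) ≤ _ := log_le_half_sub_inv (by nlinarith)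
  have hl := log_two_gt_d9
  have h2' : log b ≤ -0.6931 + 2 * (2 * b - 1) / (2 * b + 1) := by linarith
  have h3' : (1 / 2 + (1 - b) * b) * log (1 + 2 * (1 - b) * b) ≤ (1 - b) * b * ((1 - b) * b + 1) := by
    calc _ ≤ (1 / 2 + (1 - b) * b) *
          (((1 + 2 * (1 - b) * b) - (1 + 2 * (1 - b) * b)⁻¹) / 2) := by gcongr
      _ = _ := by
        rw [mul_assoc 2 (1 - b) b]
        generalize (1 - b) * b = w at hz
        have : 1 + 2 * w ≠ 0 := by linarith
        field_simp
        ring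
  have h1' : (1 - b) ^ 2 * log (1 - b) ≤ (1 - b) ^ 2 * (2 * (1 - b - 1) / (1 - b + 1)) := by gcongr
  have h2'' : b ^ 2 * log b ≤ b ^ 2 * (-0.6931 + 2 * (2 * b - 1) / (2 * b + 1)) := by gcongr
  refine (add_le_add (add_le_add h1' h2'') h3').trans ?_
  have e : (1 - b) ^ 2 * (2 * (1 - b - 1) / (1 - b + 1))
      + b ^ 2 * (-0.6931 + 2 * (2 * b - 1) / (2 * b + 1)) + (1 - b) * b * ((1 - b) * b + 1)
      = b ^ 2 * ((1 - b) * (2 * b + 1) * (3 - 3 * b + b ^ 2)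
        + (2 - b) * (-2.6931 + 2.6138 * b)) / ((2 - b) * (2 * b + 1)) := by
    have : 2 - b ≠ 0 := by linarith
    rw [show 1 - b + 1 = 2 - b by ring]
    field_simp
    ring
  rw [e]
  apply div_nonpos_of_nonpos_of_nonneg
  · apply mul_nonpos_of_nonneg_of_nonpos (by positivity)
    nlinarith [mul_nonneg hb0.le (by linarith : 0 ≤ 1 / 2 - b),
      mul_nonneg (mul_nonneg hb0.le hb0.le) (by linarith : 0 ≤ 1 / 2 - b),
      mul_nonneg (mul_nonneg hb0.le hb0.le) (mul_nonneg hb0.le (by linarith : 0 ≤ 1 / 2 - b))]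
  · apply mul_nonneg <;> linarith

theorem two_le_rpow_add {b p : ℝ} (hb0 : 0 ≤ b) (hb1 : b ≤ 1 / 2) (hp0 : 0 < p) (hp2 : p ≤ 2) :
    2 ≤ (1 - b) ^ p + b ^ p + (1 + 2 * (1 - b) * b) ^ (p / 2) := by
  rcases hb0.eq_or_lt with rfl | hb0
  · rw [zero_rpow hp0.ne']; norm_num
  have hz : 0 ≤ (1 - b) * b := mul_nonneg (by linarith) hb0.le
  set g := √(1 + 2 * (1 - b) * b)
  have hg : 0 < 1 + 2 * (1 - b) * b := by nlinarith
  have hg2 : g ^ 2 = 1 + 2 * (1 - b) * b := sq_sqrt hg.le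
  have hgp : (1 + 2 * (1 - b) * b) ^ (p / 2) = g ^ p := by
    rw [← hg2, ← rpow_natCast_mul (sqrt_nonneg _)]; congr 1; push_cast; ring
  have hlg : log (1 + 2 * (1 - b) * b) = 2 * log g := by
    rw [← hg2, log_pow]; norm_num
  have he := entropy_le_zero hb0 hb1
  have h1 := sq_mul_le_rpow (x := 1 - b) (p := p) (by linarith)
  have h2 := sq_mul_le_rpow (p := p) hb0
  have h3 := sq_mul_le_rpow (x := g) (p := p) (sqrt_pos.2 hg)
  rw [hgp]
  rw [hlg] at he
  rw [hg2] at h3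
  nlinarith [mul_nonneg (by linarith : 0 ≤ 2 - p) (neg_nonneg.2 he)]

/-- The two-point case of the strengthened moment inequality. -/
theorem symPow_le_radMoment_singleton {p C : ℝ} (hp0 : 0 < p) (hp2 : p ≤ 2)
    (hC : C ≤ 2 ^ (p / 2 - 1)) {a : ℝ} (ha : a ^ 2 ≤ 1) :
    C * symPow p (a ^ 2) ≤ radMoment p [a] 1 := by
  have ha1 := (sq_le_one_iff_abs_le_one a).1 ha
  rw [symPow_of_le_one ha]
  have hnn : 0 ≤ 2 * 2 ^ (p / 2) - (3 - a ^ 2) ^ (p / 2) := by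
    have h1 : (3 - a ^ 2) ^ (p / 2) ≤ 4 ^ (p / 2) :=
      rpow_le_rpow (by linarith) (by nlinarith [sq_nonneg a]) (by linarith)
    have h2 : (4 : ℝ) ^ (p / 2) = 2 ^ (p / 2) * 2 ^ (p / 2) := by
      rw [← mul_rpow (by norm_num) (by norm_num)]; norm_num
    have h3 : (2 : ℝ) ^ (p / 2) ≤ 2 := by
      calc (2 : ℝ) ^ (p / 2) ≤ 2 ^ (1 : ℝ) :=
            rpow_le_rpow_of_exponent_le (by norm_num) (by linarith)
        _ = 2 := rpow_one 2
    have h4 : (0 : ℝ) < 2 ^ (p / 2) := by positivity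
    nlinarith
  refine (mul_le_mul_of_nonneg_right hC hnn).trans ?_
  obtain ⟨hal, hau⟩ := abs_le.1 ha1
  have hr : radMoment p [a] 1 = ((1 + |a|) ^ p + (1 - |a|) ^ p) / 2 := by
    simp only [radMoment, radAvg]
    rw [abs_of_nonneg (by linarith : 0 ≤ 1 + a), abs_of_nonneg (by linarith : 0 ≤ 1 - a)]
    rcases abs_cases a with ⟨h, _⟩ | ⟨h, _⟩
    · rw [h]
    · rw [h]; ring_nf
  rw [hr]
  have h0 := abs_nonneg a
  have key := two_le_rpow_add (b := (1 - |a|) / 2) (p := p) (by linarith) (by linarith) hp0 hp2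
  have e1 : (1 + |a|) ^ p = 2 ^ p * (1 - (1 - |a|) / 2) ^ p := by
    rw [← mul_rpow (by norm_num) (by linarith)]; congr 1; ring
  have e2 : (1 - |a|) ^ p = 2 ^ p * ((1 - |a|) / 2) ^ p := by
    rw [← mul_rpow (by norm_num) (by linarith)]; congr 1; ring
  have e3 : (3 - a ^ 2) ^ (p / 2)
      = 2 ^ (p / 2) * (1 + 2 * (1 - (1 - |a|) / 2) * ((1 - |a|) / 2)) ^ (p / 2) := by
    rw [← mul_rpow (by norm_num) (by nlinarith)]; congr 1; rw [← sq_abs a]; ring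
  have e4 : (2 : ℝ) ^ (p / 2 - 1) = 2 ^ (p / 2) / 2 := by
    rw [rpow_sub (by norm_num), rpow_one]
  have e5 : (2 : ℝ) ^ p = 2 ^ (p / 2) * 2 ^ (p / 2) := by
    rw [← rpow_add (by norm_num)]; congr 1; ring
  rw [e1, e2, e3, e4, e5]
  have h4 : (0 : ℝ) < 2 ^ (p / 2) := by positivity
  nlinarith [mul_le_mul_of_nonneg_left key (mul_pos h4 h4).le]

theorem Gamma_add_natCast {x : ℝ} (hx : 0 < x) (n : ℕ) :
    Gamma (x + n) = Gamma x * ∏ j ∈ Finset.range n, (x + j) := by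
  induction n with
  | zero => simp
  | succ n ih =>
    rw [Finset.prod_range_succ, ← mul_assoc, ← ih]
    push_cast
    rw [← add_assoc, Gamma_add_one (by positivity)]
    ring

theorem Gamma_pow_succ_le {s t : ℝ} (hs : 0 < s) (ht : 0 < t) {k : ℕ} (hk : 0 < k) :
    Gamma ((k * s + t) / (k + 1)) ^ (k + 1) ≤ Gamma s ^ k * Gamma t := by
  have hk' : (0 : ℝ) < k := by exact_mod_cast hk
  have h := Gamma_mul_add_mul_le_rpow_Gamma_mul_rpow_Gamma hs ht
    (a := k / (k + 1)) (b := 1 / (k + 1)) (by positivity) (by positivity) (by field_simp)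
  have h0 : 0 ≤ Gamma ((k * s + t) / (k + 1)) := (Gamma_pos_of_pos (by positivity)).le
  rw [show (k : ℝ) / (k + 1) * s + 1 / (k + 1) * t = (k * s + t) / (k + 1) by field_simp] at h
  refine (pow_le_pow_left₀ h0 h (k + 1)).trans_eq ?_
  have hgs := (Gamma_pos_of_pos hs).le
  have hgt := (Gamma_pos_of_pos ht).le
  rw [mul_pow, ← rpow_mul_natCast hgs, ← rpow_mul_natCast hgt]
  congr 1
  · rw [← rpow_natCast]; congr 1; push_cast; field_simp
  · rw [show 1 / ((k : ℝ) + 1) * ((k + 1 : ℕ) : ℝ) = 1 by push_cast; field_simp, rpow_one]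

theorem Gamma_three_halves : Gamma (3 / 2) = √π / 2 := by
  rw [show (3 / 2 : ℝ) = 1 / 2 + 1 by norm_num, Gamma_add_one (by norm_num), Gamma_one_half_eq]
  ring

theorem sqrt_pi_div_two_lt_Gamma : √π / 2 < Gamma (11 / 8) := by
  have h := Gamma_pow_succ_le (s := 11 / 8 + (16 : ℕ)) (t := 2 + (16 : ℕ)) (by positivity)
    (by positivity) (k := 4) (by norm_num)
  rw [show ((4 : ℕ) * (11 / 8 + ((16 : ℕ) : ℝ)) + (2 + ((16 : ℕ) : ℝ))) / ((4 : ℕ) + 1)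
      = 3 / 2 + (16 : ℕ) by norm_num,
    Gamma_add_natCast (by norm_num), Gamma_add_natCast (by norm_num),
    Gamma_add_natCast (by norm_num), Gamma_three_halves, Gamma_two] at h
  simp only [Finset.prod_range_succ, Finset.prod_range_zero] at h
  have hs : 0 < √π := sqrt_pos.2 pi_pos
  have hsq : √π ^ 2 = π := sq_sqrt pi_pos.le
  have hl : (1.77245 : ℝ) < √π := by
    apply lt_sqrt_of_sq_lt
    have := pi_gt_d6
    norm_num at this ⊢
    linarith
  have hg := Gamma_pos_of_pos (show (0 : ℝ) < 11 / 8 by norm_num)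
  by_contra! hle
  have h4 : Gamma (11 / 8) ^ 4 ≤ (√π / 2) ^ 4 := pow_le_pow_left₀ hg.le hle 4
  have hpos : 0 < (√π / 2) ^ 4 := by positivity
  rw [show 4 + 1 = 5 from rfl, mul_pow _ _ 5, mul_pow _ _ 4, pow_succ (√π / 2) 4] at h
  generalize (√π / 2) ^ 4 = X at *
  generalize Gamma (11 / 8) ^ 4 = Y at *
  norm_num at h
  nlinarith [mul_pos hpos (sub_pos.2 hl)]

theorem Gamma_lt_sqrt_pi_div_two : Gamma (47 / 32) < √π / 2 := by
  have h := Gamma_pow_succ_le (s := 3 / 2 + (16 : ℕ)) (t := 1 + (16 : ℕ)) (by positivity)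
    (by positivity) (k := 15) (by norm_num)
  rw [show ((15 : ℕ) * (3 / 2 + ((16 : ℕ) : ℝ)) + (1 + ((16 : ℕ) : ℝ))) / ((15 : ℕ) + 1)
      = 47 / 32 + (16 : ℕ) by norm_num,
    Gamma_add_natCast (by norm_num), Gamma_add_natCast (by norm_num),
    Gamma_add_natCast (by norm_num), Gamma_three_halves, Gamma_one] at h
  simp only [Finset.prod_range_succ, Finset.prod_range_zero] at h
  have hs : 0 < √π := sqrt_pos.2 pi_pos
  have hl : (1.77245 : ℝ) < √π := by
    apply lt_sqrt_of_sq_lt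
    have := pi_gt_d6
    norm_num at this ⊢
    linarith
  by_contra! hle
  have h4 : (√π / 2) ^ 15 * (√π / 2) ≤ Gamma (47 / 32) ^ 16 := by
    rw [← pow_succ]
    exact pow_le_pow_left₀ (by positivity) hle 16
  have hpos : 0 < (√π / 2) ^ 15 := by positivity
  rw [show 15 + 1 = 16 from rfl, mul_pow _ _ 16, mul_pow _ _ 15] at h
  generalize (√π / 2) ^ 15 = X at *
  generalize Gamma (47 / 32) ^ 16 = Y at *
  norm_num at h
  nlinarith [mul_pos hpos (sub_pos.2 hl)]

theorem exists_Gamma_eq :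
    ∃ p : ℝ, 1 < p ∧ p < 2 ∧ Gamma ((p + 1) / 2) = √π / 2 := by
  have hc : ContinuousOn (fun p : ℝ => Gamma ((p + 1) / 2)) (Set.Icc (7 / 4) (31 / 16)) := by
    intro p hp
    refine ContinuousAt.continuousWithinAt ?_
    have h1 : ContinuousAt (fun p : ℝ => (p + 1) / 2) p :=
      (continuousAt_id.add continuousAt_const).div_const 2
    have h2 : ContinuousAt Gamma ((p + 1) / 2) := by
      refine (differentiableAt_Gamma fun m => ?_).continuousAt
      have : (0 : ℝ) ≤ m := m.cast_nonneg
      linarith [hp.1]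
    exact ContinuousAt.comp (f := fun p : ℝ => (p + 1) / 2) h2 h1
  obtain ⟨p, hp, hpe⟩ := intermediate_value_Icc' (by norm_num) hc
    (show √π / 2 ∈ Set.Icc _ _ from ⟨by norm_num; exact Gamma_lt_sqrt_pi_div_two.le,
      by norm_num; exact sqrt_pi_div_two_lt_Gamma.le⟩)
  exact ⟨p, by linarith [hp.1], by linarith [hp.2], hpe⟩

theorem Gamma_le_of_mem_Icc {q r : ℝ} (hq1 : 1 < q) (hq2 : q < 2)
    (hq : Gamma ((q + 1) / 2) = √π / 2) (hqr : q ≤ r) (hr2 : r ≤ 2) :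
    Gamma ((r + 1) / 2) ≤ √π / 2 := by
  have h := convexOn_Gamma.le_max_of_mem_Icc (x := (q + 1) / 2) (y := 3 / 2)
    (z := (r + 1) / 2) (Set.mem_Ioi.2 (by linarith)) (Set.mem_Ioi.2 (by norm_num))
    ⟨by linarith, by linarith⟩
  rwa [hq, Gamma_three_halves, max_self] at h

theorem seven_quarters_le {q : ℝ} (hq1 : 1 < q) (hq2 : q < 2)
    (hq : Gamma ((q + 1) / 2) = √π / 2) : 7 / 4 ≤ q := by
  by_contra! h
  have := Gamma_le_of_mem_Icc hq1 hq2 hq h.le (by norm_num)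
  norm_num at this
  linarith [sqrt_pi_div_two_lt_Gamma]

section

/-- The measure `t ^ (-p - 1) dt` on the positive half-line. -/
noncomputable def powMeasure (p : ℝ) : Measure ℝ :=
  (volume.restrict (Set.Ioi 0)).withDensity fun t => ENNReal.ofReal (t ^ (-p - 1))

instance (p : ℝ) : SFinite (powMeasure p) := by unfold powMeasure; infer_instance

theorem measurable_powDensity (p : ℝ) :
    Measurable fun t : ℝ => ENNReal.ofReal (t ^ (-p - 1)) := by fun_prop

theorem integral_powMeasure (p : ℝ) (φ : ℝ → ℝ) :
    ∫ t, φ t ∂powMeasure p = ∫ t in Set.Ioi 0, t ^ (-p - 1) * φ t := by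
  rw [powMeasure, integral_withDensity_eq_integral_toReal_smul (measurable_powDensity p)
    (by simp)]
  refine setIntegral_congr_fun measurableSet_Ioi fun t ht => ?_
  have : 0 ≤ t ^ (-p - 1) := rpow_nonneg (le_of_lt ht) _
  simp [ENNReal.toReal_ofReal this]

theorem integrable_powMeasure_iff (p : ℝ) (φ : ℝ → ℝ) :
    Integrable φ (powMeasure p) ↔
      IntegrableOn (fun t => t ^ (-p - 1) * φ t) (Set.Ioi 0) := by
  rw [powMeasure, integrable_withDensity_iff_integrable_smul' (measurable_powDensity p)
    (by simp)]
  refine integrableOn_congr_fun (fun t ht => ?_) measurableSet_Ioi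
  have : 0 ≤ t ^ (-p - 1) := rpow_nonneg (le_of_lt ht) _
  simp [ENNReal.toReal_ofReal this]

theorem powMeasure_ae_pos (p : ℝ) : ∀ᵐ t ∂powMeasure p, 0 < t := by
  have : ∀ᵐ t ∂(volume.restrict (Set.Ioi (0 : ℝ))), 0 < t :=
    ae_restrict_mem measurableSet_Ioi
  exact (withDensity_absolutelyContinuous _ _).ae_le this

theorem powMeasure_Ioi {p a : ℝ} (hp : 0 < p) (ha : 0 < a) :
    powMeasure p (Set.Ioi a) = ENNReal.ofReal (a ^ (-p) / p) := by
  rw [powMeasure, withDensity_apply _ measurableSet_Ioi,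
    Measure.restrict_restrict measurableSet_Ioi,
    Set.inter_eq_left.2 (Set.Ioi_subset_Ioi ha.le),
    ← ofReal_integral_eq_lintegral_ofReal, integral_Ioi_rpow_of_lt (by linarith) ha]
  · congr 1
    rw [show -p - 1 + 1 = -p by ring, neg_div_neg_eq]
  · exact integrableOn_Ioi_rpow_of_lt (by linarith) ha
  · filter_upwards [ae_restrict_mem measurableSet_Ioi] with t ht
    exact rpow_nonneg (ha.le.trans (le_of_lt ht)) _

variable {p : ℝ}

theorem integrable_powMeasure (hp0 : 0 < p) (hp2 : p < 2) {φ : ℝ → ℝ} (hm : Measurable φ)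
    {c d : ℝ} (hφ : ∀ t, |φ t| ≤ c * t ^ 2) (hφd : ∀ t, |φ t| ≤ d) :
    Integrable φ (powMeasure p) := by
  rw [integrable_powMeasure_iff, ← Set.Ioc_union_Ioi_eq_Ioi (zero_le_one' ℝ),
    integrableOn_union]
  have hms : Measurable fun t : ℝ => t ^ (-p - 1) * φ t := by fun_prop
  constructor
  · have h : IntegrableOn (fun t : ℝ => c * t ^ (1 - p)) (Set.Ioc 0 1) := by
      have := intervalIntegral.intervalIntegrable_rpow' (a := 0) (b := 1) (r := 1 - p)
        (by linarith)
      rw [intervalIntegrable_iff_integrableOn_Ioc_of_le zero_le_one] at this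
      exact this.const_mul c
    refine h.mono' hms.aestronglyMeasurable ?_
    filter_upwards [ae_restrict_mem measurableSet_Ioc] with t ht
    have h0 : 0 < t := ht.1
    rw [norm_mul, norm_eq_abs, norm_eq_abs, abs_of_pos (rpow_pos_of_pos h0 _)]
    calc t ^ (-p - 1) * |φ t| ≤ t ^ (-p - 1) * (c * t ^ 2) := by gcongr; exact hφ t
      _ = c * (t ^ (-p - 1) * t ^ (2 : ℝ)) := by rw [rpow_two]; ring
      _ = c * t ^ (1 - p) := by rw [← rpow_add h0]; ring_nf
  · have h : IntegrableOn (fun t : ℝ => d * t ^ (-p - 1)) (Set.Ioi 1) :=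
      (integrableOn_Ioi_rpow_of_lt (by linarith) one_pos).const_mul d
    refine h.mono' hms.aestronglyMeasurable ?_
    filter_upwards [ae_restrict_mem measurableSet_Ioi] with t ht
    have h0 : 0 < t := one_pos.trans ht
    rw [norm_mul, norm_eq_abs, norm_eq_abs, abs_of_pos (rpow_pos_of_pos h0 _), mul_comm]
    gcongr
    exact hφd t

theorem integral_powMeasure_comp_mul (φ : ℝ → ℝ) {s : ℝ} (hs : 0 < s) :
    ∫ t, φ (s * t) ∂powMeasure p = s ^ p * ∫ t, φ t ∂powMeasure p := by
  rw [integral_powMeasure, integral_powMeasure]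
  have h := integral_comp_mul_left_Ioi (fun t => t ^ (-p - 1) * φ t) 0 hs
  rw [mul_zero, smul_eq_mul] at h
  have h2 : ∫ t in Set.Ioi 0, (s * t) ^ (-p - 1) * φ (s * t)
      = s ^ (-p - 1) * ∫ t in Set.Ioi 0, t ^ (-p - 1) * φ (s * t) := by
    rw [← integral_const_mul]
    refine setIntegral_congr_fun measurableSet_Ioi fun t ht => ?_
    rw [mul_rpow hs.le (le_of_lt ht), mul_assoc]
  rw [h2, rpow_sub_one hs.ne', rpow_neg hs.le] at h
  have hsp := rpow_pos_of_pos hs p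
  field_simp at h
  linarith

/-- The normalising constant in the integral representation of `|s| ^ p`. -/
noncomputable def cosConst (p : ℝ) : ℝ := ∫ t, (1 - cos t) ∂powMeasure p

theorem one_sub_cos_mem (t : ℝ) : |1 - cos t| ≤ (1 / 2) * t ^ 2 ∧ |1 - cos t| ≤ 2 := by
  rw [abs_of_nonneg (by linarith [cos_le_one t])]
  constructor
  · linarith [one_sub_sq_div_two_le_cos (x := t)]
  · linarith [neg_one_le_cos t]

theorem integrable_one_sub_cos_mul (hp0 : 0 < p) (hp2 : p < 2) (s : ℝ) :
    Integrable (fun t => 1 - cos (s * t)) (powMeasure p) := by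
  refine integrable_powMeasure hp0 hp2 (by fun_prop) (c := 1 / 2 * s ^ 2) (d := 2)
    (fun t => ?_) fun t => (one_sub_cos_mem _).2
  have := (one_sub_cos_mem (s * t)).1
  rwa [mul_pow, ← mul_assoc] at this

theorem integral_one_sub_cos_mul (hp0 : 0 < p) (s : ℝ) :
    ∫ t, (1 - cos (s * t)) ∂powMeasure p = |s| ^ p * cosConst p := by
  rcases eq_or_ne s 0 with rfl | hs
  · simp [zero_rpow hp0.ne']
  · rw [cosConst, ← integral_powMeasure_comp_mul (fun t => 1 - cos t) (abs_pos.2 hs)]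
    refine integral_congr_ae (Eventually.of_forall fun t => ?_)
    simp only
    rcases abs_choice s with h | h <;> simp [h]

theorem cosConst_pos (hp0 : 0 < p) (hp2 : p < 2) : 0 < cosConst p := by
  have hi := integrable_one_sub_cos_mul hp0 hp2 1
  simp only [one_mul] at hi
  have h0 : ∀ t : ℝ, 0 ≤ 1 - cos t := fun t => by linarith [cos_le_one t]
  rw [cosConst, integral_pos_iff_support_of_nonneg h0 hi]
  have hsub : Set.Ioo (1 : ℝ) 2 ⊆ Function.support fun t => 1 - cos t := by
    intro t ht h
    have hc : cos t = 1 := by simp only at h; linarith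
    have := cos_eq_one_iff_of_lt_of_lt (x := t) (by linarith [pi_gt_three, ht.1])
      (by linarith [pi_gt_three, ht.2])
    rw [this] at hc
    linarith [ht.1]
  refine lt_of_lt_of_le ?_ (measure_mono hsub)
  rw [powMeasure, withDensity_apply _ measurableSet_Ioo,
    Measure.restrict_restrict measurableSet_Ioo,
    Set.inter_eq_left.2 (Set.Ioo_subset_Ioi_self.trans (Set.Ioi_subset_Ioi zero_le_one))]
  rw [setLIntegral_pos_iff (measurable_powDensity p)]
  have : Set.Ioo (1 : ℝ) 2 ⊆ (Function.support fun t : ℝ => ENNReal.ofReal (t ^ (-p - 1)))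
      ∩ Set.Ioo 1 2 := by
    refine fun t ht => ⟨?_, ht⟩
    have : 0 < t ^ (-p - 1) := rpow_pos_of_pos (by linarith [ht.1]) _
    simp [this]
  refine lt_of_lt_of_le ?_ (measure_mono this)
  simp

theorem integral_one_sub_radAvg (hp0 : 0 < p) (hp2 : p < 2) (l : List ℝ) (x : ℝ) :
    Integrable (fun t => 1 - cos (x * t) * (l.map fun a => cos (a * t)).prod) (powMeasure p) ∧
    ∫ t, (1 - cos (x * t) * (l.map fun a => cos (a * t)).prod) ∂powMeasure p
      = radMoment p l x * cosConst p := by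
  simp_rw [← radAvg_cos]
  rw [radMoment]
  induction l generalizing x with
  | nil =>
    exact ⟨integrable_one_sub_cos_mul hp0 hp2 x, integral_one_sub_cos_mul hp0 x⟩
  | cons a l ih =>
    have h : (fun t => 1 - radAvg (fun s => cos (s * t)) (a :: l) x)
        = fun t => 1 / 2 * (1 - radAvg (fun s => cos (s * t)) l (x + a))
          + 1 / 2 * (1 - radAvg (fun s => cos (s * t)) l (x - a)) := by
      ext t; simp only [radAvg]; ring
    obtain ⟨i1, e1⟩ := ih (x + a)
    obtain ⟨i2, e2⟩ := ih (x - a)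
    rw [h]
    refine ⟨(i1.const_mul _).add (i2.const_mul _), ?_⟩
    rw [integral_add (i1.const_mul _) (i2.const_mul _), integral_const_mul, integral_const_mul,
      e1, e2]
    simp only [radAvg]; ring

/-- The `p`-th absolute moment of a standard Gaussian variable. -/
noncomputable def gaussMoment (p : ℝ) : ℝ := 2 ^ (p / 2) * Gamma ((p + 1) / 2) / √π

theorem gaussMoment_pos (hp : 0 < p) : 0 < gaussMoment p := by
  have := Gamma_pos_of_pos (show 0 < (p + 1) / 2 by linarith)
  unfold gaussMoment
  positivity

theorem integral_abs_rpow_gaussian (hp : 0 < p) :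
    ∫ x, |x| ^ p ∂ProbabilityTheory.gaussianReal 0 1 = gaussMoment p := by
  rw [ProbabilityTheory.integral_gaussianReal_eq_integral_smul one_ne_zero]
  have h : ∀ x : ℝ, ProbabilityTheory.gaussianPDFReal 0 1 x • |x| ^ p
      = (fun y => (√(2 * π))⁻¹ * (y ^ p * exp (-(1 / 2) * y ^ (2 : ℝ)))) |x| := by
    intro x
    simp only [ProbabilityTheory.gaussianPDFReal, smul_eq_mul, rpow_two, sq_abs]
    simp only [NNReal.coe_one, mul_one, sub_zero]
    rw [show -x ^ 2 / 2 = -(1 / 2) * x ^ 2 by ring]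
    ring
  simp_rw [h]
  rw [integral_comp_abs (f := fun y => (√(2 * π))⁻¹ * (y ^ p * exp (-(1 / 2) * y ^ (2 : ℝ)))),
    integral_const_mul, integral_rpow_mul_exp_neg_mul_rpow two_pos (by linarith) (by norm_num),
    gaussMoment, sqrt_mul (by norm_num), one_div, inv_rpow (by norm_num), ← rpow_neg (by norm_num),
    sqrt_eq_rpow 2, show -(-(p + 1) / 2) = p / 2 + 1 / 2 by ring, rpow_add two_pos]
  have : (0 : ℝ) < 2 ^ (1 / 2 : ℝ) := by positivity
  field_simp

theorem integral_cos_gaussian (t : ℝ) :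
    ∫ x, cos (x * t) ∂ProbabilityTheory.gaussianReal 0 1 = exp (-(t ^ 2 / 2)) := by
  have h := ProbabilityTheory.charFun_gaussianReal (μ := 0) (v := 1) t
  rw [charFun_apply_real] at h
  have hi : Integrable (fun x : ℝ => Complex.exp (t * x * Complex.I))
      (ProbabilityTheory.gaussianReal 0 1) := by
    refine Integrable.mono' (integrable_const (1 : ℝ)) (by fun_prop)
      (Eventually.of_forall fun x => ?_)
    rw [← Complex.ofReal_mul, Complex.norm_exp_ofReal_mul_I]
  have h2 := congrArg Complex.re h
  rw [← RCLike.re_eq_complex_re, ← integral_re hi] at h2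
  simp only [RCLike.re_eq_complex_re, ← Complex.ofReal_mul, Complex.exp_ofReal_mul_I_re] at h2
  simp_rw [mul_comm _ t]
  rw [h2]
  rw [show (((t * (0 : ℝ) : ℝ) : ℂ) * Complex.I - ((1 : NNReal) : ℝ) * (t : ℂ) ^ 2 / 2)
      = ((-(t ^ 2 / 2) : ℝ) : ℂ) by push_cast; simp]
  exact Complex.exp_ofReal_re _

theorem one_sub_gaussian_mem (t : ℝ) :
    0 ≤ 1 - exp (-(t ^ 2 / 2)) ∧ 1 - exp (-(t ^ 2 / 2)) ≤ (1 / 2) * t ^ 2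
      ∧ 1 - exp (-(t ^ 2 / 2)) ≤ 1 := by
  refine ⟨?_, ?_, by linarith [exp_pos (-(t ^ 2 / 2))]⟩
  · have := exp_le_one_iff.2 (show -(t ^ 2 / 2) ≤ 0 by have := sq_nonneg t; linarith)
    linarith
  · linarith [add_one_le_exp (-(t ^ 2 / 2))]

theorem integrable_one_sub_gaussian (hp0 : 0 < p) (hp2 : p < 2) :
    Integrable (fun t => 1 - exp (-(t ^ 2 / 2))) (powMeasure p) := by
  refine integrable_powMeasure hp0 hp2 (by fun_prop) (c := 1 / 2) (d := 1) (fun t => ?_)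
    fun t => ?_ <;> rw [abs_of_nonneg (one_sub_gaussian_mem t).1]
  · exact (one_sub_gaussian_mem t).2.1
  · exact (one_sub_gaussian_mem t).2.2

theorem integral_one_sub_gaussian (hp0 : 0 < p) (hp2 : p < 2) :
    ∫ t, (1 - exp (-(t ^ 2 / 2))) ∂powMeasure p = gaussMoment p * cosConst p := by
  set γ := ProbabilityTheory.gaussianReal 0 1
  have hK := cosConst_pos hp0 hp2
  have hC := gaussMoment_pos hp0
  have hswap := lintegral_lintegral_swap (μ := γ) (ν := powMeasure p)
    (f := fun x t => ENNReal.ofReal (1 - cos (x * t))) (by fun_prop)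
  have h1 : ∀ x : ℝ, ∫⁻ t, ENNReal.ofReal (1 - cos (x * t)) ∂powMeasure p
      = ENNReal.ofReal (|x| ^ p * cosConst p) := by
    intro x
    rw [← integral_one_sub_cos_mul hp0, ofReal_integral_eq_lintegral_ofReal
      (integrable_one_sub_cos_mul hp0 hp2 x)]
    exact Eventually.of_forall fun t => by simp [cos_le_one]
  have h2 : ∀ t : ℝ, ∫⁻ x, ENNReal.ofReal (1 - cos (x * t)) ∂γ
      = ENNReal.ofReal (1 - exp (-(t ^ 2 / 2))) := by
    intro t
    have hi : Integrable (fun x => cos (x * t)) γ :=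
      Integrable.mono' (integrable_const (1 : ℝ)) (by fun_prop)
        (Eventually.of_forall fun x => by simpa using abs_cos_le_one _)
    have hi2 : Integrable (fun x => 1 - cos (x * t)) γ := (integrable_const 1).sub hi
    rw [← ofReal_integral_eq_lintegral_ofReal hi2
      (Eventually.of_forall fun x => by simp [cos_le_one]), integral_sub (integrable_const _) hi,
      integral_cos_gaussian]
    simp
  simp_rw [h1, h2] at hswap
  have hi : Integrable (fun x => |x| ^ p) γ := by
    by_contra hn
    have := integral_undef hn
    rw [integral_abs_rpow_gaussian hp0] at this
    linarith
  rw [← ofReal_integral_eq_lintegral_ofReal (hi.mul_const _)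
      (Eventually.of_forall fun x => by simp only [Pi.zero_apply]; positivity),
    ← ofReal_integral_eq_lintegral_ofReal (integrable_one_sub_gaussian hp0 hp2)
      (Eventually.of_forall fun t => (one_sub_gaussian_mem t).1), integral_mul_const,
    integral_abs_rpow_gaussian hp0,
    ENNReal.ofReal_eq_ofReal_iff (by positivity)
      (integral_nonneg fun t => (one_sub_gaussian_mem t).1)] at hswap
  exact hswap.symm

end

section

theorem lintegral_rpow_indicator {s x : ℝ} (hs : 0 < s) (hx0 : 0 ≤ x) (hx1 : x ≤ 1) :
    ∫⁻ y in Set.Ioo 0 1, ENNReal.ofReal (y ^ (s - 1)) * (Set.Ioi x).indicator 1 y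
      = ENNReal.ofReal ((1 - x ^ s) / s) := by
  have h : ∀ y : ℝ, ENNReal.ofReal (y ^ (s - 1)) * (Set.Ioi x).indicator 1 y
      = (Set.Ioi x).indicator (fun y => ENNReal.ofReal (y ^ (s - 1))) y := by
    intro y
    by_cases hy : y ∈ Set.Ioi x <;> simp [hy]
  simp_rw [h]
  rw [setLIntegral_indicator measurableSet_Ioi,
    show Set.Ioi x ∩ Set.Ioo 0 1 = Set.Ioo x 1 by
      ext y; simp only [Set.mem_inter_iff, Set.mem_Ioi, Set.mem_Ioo]
      exact ⟨fun h => ⟨h.1, h.2.2⟩, fun h => ⟨h.1, hx0.trans_lt h.1, h.2⟩⟩,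
    ← ofReal_integral_eq_lintegral_ofReal]
  · rw [← integral_Ioc_eq_integral_Ioo, ← intervalIntegral.integral_of_le hx1,
      integral_rpow (Or.inl (by linarith))]
    simp
  · have := (intervalIntegral.intervalIntegrable_rpow' (a := x) (b := 1) (r := s - 1)
      (by linarith)).1
    exact this.mono_set Set.Ioo_subset_Ioc_self
  · filter_upwards [ae_restrict_mem measurableSet_Ioo] with y hy
    exact rpow_nonneg (hx0.trans hy.1.le) _

variable {μ : Measure ℝ} {f g : ℝ → ℝ}

theorem lintegral_one_sub_rpow [SFinite μ] {s : ℝ} (hs : 0 < s) (hf : Measurable f)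
    (hf0 : ∀ t, 0 ≤ f t) (hf1 : ∀ t, f t ≤ 1) :
    ∫⁻ t, ENNReal.ofReal ((1 - f t ^ s) / s) ∂μ
      = ∫⁻ y in Set.Ioo 0 1, ENNReal.ofReal (y ^ (s - 1)) * μ {t | f t < y} := by
  have hset : MeasurableSet {q : ℝ × ℝ | f q.1 < q.2} :=
    measurableSet_lt (hf.comp measurable_fst) measurable_snd
  have hmeas : Measurable fun q : ℝ × ℝ =>
      ENNReal.ofReal (q.2 ^ (s - 1)) * (Set.Ioi (f q.1)).indicator 1 q.2 := by
    refine Measurable.mul (by fun_prop) ?_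
    exact (measurable_const (a := (1 : ENNReal))).indicator hset
  calc ∫⁻ t, ENNReal.ofReal ((1 - f t ^ s) / s) ∂μ
      = ∫⁻ t, (∫⁻ y in Set.Ioo 0 1,
          ENNReal.ofReal (y ^ (s - 1)) * (Set.Ioi (f t)).indicator 1 y) ∂μ := by
        exact lintegral_congr fun t => (lintegral_rpow_indicator hs (hf0 t) (hf1 t)).symm
    _ = ∫⁻ y in Set.Ioo 0 1, ∫⁻ t,
          ENNReal.ofReal (y ^ (s - 1)) * (Set.Ioi (f t)).indicator 1 y ∂μ :=
        lintegral_lintegral_swap (f := fun t y =>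
          ENNReal.ofReal (y ^ (s - 1)) * (Set.Ioi (f t)).indicator 1 y) hmeas.aemeasurable
    _ = _ := by
        refine lintegral_congr fun y => ?_
        rw [lintegral_const_mul' _ _ ENNReal.ofReal_ne_top]
        congr 1
        have h : ∀ t, (Set.Ioi (f t)).indicator (1 : ℝ → ENNReal) y
            = {t | f t < y}.indicator 1 t := fun t => by
          simp [Set.indicator_apply]
        simp_rw [h]
        exact lintegral_indicator_one (hf measurableSet_Iio)

theorem mul_add_mul_le_of_le {a b c d : ENNReal} (hab : a ≤ b) (hcd : c ≤ d) :
    a * d + b * c ≤ a * c + b * d := by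
  obtain ⟨e, rfl⟩ := exists_add_of_le hcd
  have : a * e ≤ b * e := by gcongr
  calc a * (c + e) + b * c = a * c + b * c + a * e := by ring
    _ ≤ a * c + b * c + b * e := by gcongr
    _ = a * c + b * (c + e) := by ring

/-- If the distribution functions of `f` and `g` cross once, an inequality between the
integrals of `1 - g ^ 2` and `1 - f ^ 2` persists for larger exponents. -/
theorem lintegral_one_sub_rpow_le_of_crossing [SFinite μ] {s y₀ : ℝ} (hs : 2 ≤ s)
    (hf : Measurable f) (hf0 : ∀ t, 0 ≤ f t) (hf1 : ∀ t, f t ≤ 1)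
    (hg : Measurable g) (hg0 : ∀ t, 0 ≤ g t) (hg1 : ∀ t, g t ≤ 1) (hy₀ : 0 < y₀)
    (h1 : ∀ y, 0 < y → y < 1 → y < y₀ → μ {t | f t < y} ≤ μ {t | g t < y})
    (h2 : ∀ y, 0 < y → y < 1 → y₀ < y → μ {t | g t < y} ≤ μ {t | f t < y})
    (hfin : ∫⁻ t, ENNReal.ofReal ((1 - f t ^ (2 : ℝ)) / 2) ∂μ ≠ ⊤)
    (hle : ∫⁻ t, ENNReal.ofReal ((1 - g t ^ (2 : ℝ)) / 2) ∂μ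
      ≤ ∫⁻ t, ENNReal.ofReal ((1 - f t ^ (2 : ℝ)) / 2) ∂μ) :
    ∫⁻ t, ENNReal.ofReal ((1 - g t ^ s) / s) ∂μ
      ≤ ∫⁻ t, ENNReal.ofReal ((1 - f t ^ s) / s) ∂μ := by
  have hs0 : 0 < s := by linarith
  rw [lintegral_one_sub_rpow two_pos hf hf0 hf1] at hfin hle
  rw [lintegral_one_sub_rpow two_pos hg hg0 hg1] at hle
  rw [lintegral_one_sub_rpow hs0 hf hf0 hf1, lintegral_one_sub_rpow hs0 hg hg0 hg1]
  have hmono : ∀ h : ℝ → ℝ, Measurable fun y => μ {t | h t < y} := fun h =>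
    Monotone.measurable fun y z hyz => measure_mono fun t (ht : h t < y) => ht.trans_le hyz
  have hMf := hmono f
  have hMg := hmono g
  set c := ENNReal.ofReal (y₀ ^ (s - 2)) with hc
  have key : ∀ y ∈ Set.Ioo (0 : ℝ) 1,
      ENNReal.ofReal (y ^ (s - 1)) * μ {t | g t < y}
        + c * (ENNReal.ofReal (y ^ ((2 : ℝ) - 1)) * μ {t | f t < y})
      ≤ ENNReal.ofReal (y ^ (s - 1)) * μ {t | f t < y}
        + c * (ENNReal.ofReal (y ^ ((2 : ℝ) - 1)) * μ {t | g t < y}) := by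
    intro y hy
    have hsplit : y ^ (s - 1) = y ^ (s - 2) * y ^ ((2 : ℝ) - 1) := by
      rw [← rpow_add hy.1]; ring_nf
    rw [← mul_assoc, ← mul_assoc, hc, ← ENNReal.ofReal_mul (by positivity), hsplit]
    have hp : 0 ≤ y ^ ((2 : ℝ) - 1) := rpow_nonneg hy.1.le _
    rcases lt_trichotomy y y₀ with h | h | h
    · refine mul_add_mul_le_of_le (ENNReal.ofReal_le_ofReal ?_) (h1 y hy.1 hy.2 h)
      exact mul_le_mul_of_nonneg_right (rpow_le_rpow hy.1.le h.le (by linarith)) hp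
    · rw [h, add_comm]
    · rw [add_comm]
      refine (mul_add_mul_le_of_le (ENNReal.ofReal_le_ofReal ?_) (h2 y hy.1 hy.2 h)).trans
        (add_comm _ _).le
      exact mul_le_mul_of_nonneg_right (rpow_le_rpow hy₀.le h.le (by linarith)) hp
  have hwm : ∀ M : ℝ → ENNReal, Measurable M →
      Measurable fun y : ℝ => ENNReal.ofReal (y ^ (s - 1)) * M y := fun M hM =>
    Measurable.mul (by fun_prop) hM
  have hle_int := setLIntegral_mono' (μ := volume) measurableSet_Ioo key
  rw [lintegral_add_left (hwm _ hMg), lintegral_add_left (hwm _ hMf),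
    lintegral_const_mul' _ _ ENNReal.ofReal_ne_top,
    lintegral_const_mul' _ _ ENNReal.ofReal_ne_top] at hle_int
  have hfin2 := ENNReal.mul_ne_top (ENNReal.ofReal_ne_top (r := y₀ ^ (s - 2))) hfin
  rw [← hc] at hfin2
  refine (ENNReal.add_le_add_iff_right hfin2).1 (hle_int.trans ?_)
  gcongr

end

theorem nonneg_of_hasDerivAt {F F' : ℝ → ℝ} {b : ℝ} (hF : ∀ x, 0 ≤ x → x < b → HasDerivAt F (F' x) x)
    (hF' : ∀ x, 0 ≤ x → x < b → 0 ≤ F' x) (h0 : 0 ≤ F 0) {x : ℝ} (hx0 : 0 ≤ x) (hxb : x < b) :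
    0 ≤ F x := by
  have hm : MonotoneOn F (Set.Ico 0 b) := by
    refine monotoneOn_of_deriv_nonneg (convex_Ico 0 b)
      (fun y hy => (hF y hy.1 hy.2).continuousAt.continuousWithinAt) ?_ ?_
    · rw [interior_Ico]
      exact fun y hy => (hF y hy.1.le hy.2).differentiableAt.differentiableWithinAt
    · rw [interior_Ico]
      intro y hy
      rw [(hF y hy.1.le hy.2).deriv]
      exact hF' y hy.1.le hy.2
  exact h0.trans (hm ⟨le_rfl, hx0.trans_lt hxb⟩ ⟨hx0, hxb⟩ hx0)

theorem sin_le_taylor_three {x : ℝ} (hx : 0 ≤ x) : x - x ^ 3 / 6 ≤ sin x := by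
  have := nonneg_of_hasDerivAt (F := fun y => sin y - (y - y ^ 3 / 6))
    (F' := fun y => cos y - (1 - y ^ 2 / 2)) (b := x + 1) (fun y _ _ => by
      refine ((hasDerivAt_sin y).sub ((hasDerivAt_id y).sub
        ((hasDerivAt_pow 3 y).div_const 6))).congr_deriv ?_
      norm_num; ring)
    (fun y _ _ => by linarith [one_sub_sq_div_two_le_cos (x := y)]) (by simp) hx (by linarith)
  linarith

theorem cos_le_taylor_four {x : ℝ} (hx : 0 ≤ x) : cos x ≤ 1 - x ^ 2 / 2 + x ^ 4 / 24 := by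
  have := nonneg_of_hasDerivAt (F := fun y => (1 - y ^ 2 / 2 + y ^ 4 / 24) - cos y)
    (F' := fun y => sin y - (y - y ^ 3 / 6)) (b := x + 1) (fun y _ _ => by
      refine ((((hasDerivAt_const y 1).sub ((hasDerivAt_pow 2 y).div_const 2)).add
        ((hasDerivAt_pow 4 y).div_const 24)).sub (hasDerivAt_cos y)).congr_deriv ?_
      norm_num; ring)
    (fun y hy _ => by linarith [sin_le_taylor_three hy]) (by simp) hx (by linarith)
  linarith

theorem sin_le_taylor_five {x : ℝ} (hx : 0 ≤ x) : sin x ≤ x - x ^ 3 / 6 + x ^ 5 / 120 := by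
  have := nonneg_of_hasDerivAt (F := fun y => (y - y ^ 3 / 6 + y ^ 5 / 120) - sin y)
    (F' := fun y => (1 - y ^ 2 / 2 + y ^ 4 / 24) - cos y) (b := x + 1) (fun y _ _ => by
      refine ((((hasDerivAt_id y).sub ((hasDerivAt_pow 3 y).div_const 6)).add
        ((hasDerivAt_pow 5 y).div_const 120)).sub (hasDerivAt_sin y)).congr_deriv ?_
      norm_num; ring)
    (fun y hy _ => by linarith [cos_le_taylor_four hy]) (by simp) hx (by linarith)
  linarith

theorem taylor_six_le_cos {x : ℝ} (hx : 0 ≤ x) :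
    1 - x ^ 2 / 2 + x ^ 4 / 24 - x ^ 6 / 720 ≤ cos x := by
  have := nonneg_of_hasDerivAt
    (F := fun y => cos y - (1 - y ^ 2 / 2 + y ^ 4 / 24 - y ^ 6 / 720))
    (F' := fun y => (y - y ^ 3 / 6 + y ^ 5 / 120) - sin y) (b := x + 1) (fun y _ _ => by
      refine ((hasDerivAt_cos y).sub ((((hasDerivAt_const y 1).sub
        ((hasDerivAt_pow 2 y).div_const 2)).add ((hasDerivAt_pow 4 y).div_const 24)).sub
        ((hasDerivAt_pow 6 y).div_const 720))).congr_deriv ?_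
      norm_num; ring)
    (fun y hy _ => by linarith [sin_le_taylor_five hy]) (by simp) hx (by linarith)
  linarith

theorem hasDerivAt_tan_of_mem {y : ℝ} (hy0 : 0 ≤ y) (hy1 : y < π / 2) :
    HasDerivAt tan (1 + tan y ^ 2) y := by
  have hc : 0 < cos y := cos_pos_of_mem_Ioo ⟨by linarith [pi_pos], hy1⟩
  refine (hasDerivAt_tan hc.ne').congr_deriv ?_
  rw [tan_eq_sin_div_cos]
  field_simp
  exact (cos_sq_add_sin_sq y).symm

/-- One step of the Picard iteration for the lower Taylor bounds of `tan`. -/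
theorem le_tan_of_le_tan {P Q Q' : ℝ → ℝ} (hP0 : ∀ y, 0 ≤ y → 0 ≤ P y)
    (hP : ∀ y, 0 ≤ y → y < π / 2 → P y ≤ tan y) (hQ : ∀ y, HasDerivAt Q (Q' y) y)
    (hQP : ∀ y, 0 ≤ y → Q' y ≤ 1 + P y ^ 2) (hQ0 : Q 0 = 0) {y : ℝ} (hy0 : 0 ≤ y)
    (hy1 : y < π / 2) : Q y ≤ tan y := by
  have := nonneg_of_hasDerivAt (F := fun y => tan y - Q y)
    (F' := fun y => 1 + tan y ^ 2 - Q' y) (b := π / 2)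
    (fun y h0 h1 => (hasDerivAt_tan_of_mem h0 h1).sub (hQ y))
    (fun y h0 h1 => by
      have := pow_le_pow_left₀ (hP0 y h0) (hP y h0 h1) 2
      linarith [hQP y h0])
    (by simp [hQ0]) hy0 hy1
  linarith

theorem taylor_le_tan {y : ℝ} (hy0 : 0 ≤ y) (hy1 : y < π / 2) :
    y + y ^ 3 / 3 + 2 * y ^ 5 / 15 + 17 * y ^ 7 / 315 ≤ tan y := by
  have h1 : ∀ y : ℝ, 0 ≤ y → y < π / 2 → y ≤ tan y := fun y h0 h1 => le_tan h0 h1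
  have h3 : ∀ y : ℝ, 0 ≤ y → y < π / 2 → y + y ^ 3 / 3 ≤ tan y := fun y h0 h1' =>
    le_tan_of_le_tan (P := fun y => y) (Q := fun y => y + y ^ 3 / 3) (Q' := fun y => 1 + y ^ 2)
      (fun _ h => h) h1
      (fun y => ((hasDerivAt_id y).add ((hasDerivAt_pow 3 y).div_const 3)).congr_deriv
        (by norm_num))
      (fun y h => by linarith) (by simp) h0 h1'
  have h5 : ∀ y : ℝ, 0 ≤ y → y < π / 2 → y + y ^ 3 / 3 + 2 * y ^ 5 / 15 ≤ tan y :=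
    fun y h0 h1' =>
    le_tan_of_le_tan (P := fun y => y + y ^ 3 / 3) (Q := fun y => y + y ^ 3 / 3 + 2 * y ^ 5 / 15)
      (Q' := fun y => 1 + y ^ 2 + 2 * y ^ 4 / 3) (fun _ h => by positivity) h3
      (fun y => (((hasDerivAt_id y).add ((hasDerivAt_pow 3 y).div_const 3)).add
        (((hasDerivAt_pow 5 y).const_mul 2).div_const 15)).congr_deriv (by norm_num; ring))
      (fun y h => by have : 0 ≤ y ^ 6 := by positivity
                     nlinarith) (by simp) h0 h1'
  exact le_tan_of_le_tan (P := fun y => y + y ^ 3 / 3 + 2 * y ^ 5 / 15)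
    (Q := fun y => y + y ^ 3 / 3 + 2 * y ^ 5 / 15 + 17 * y ^ 7 / 315)
    (Q' := fun y => 1 + y ^ 2 + 2 * y ^ 4 / 3 + 17 * y ^ 6 / 45) (fun _ h => by positivity) h5
    (fun y => ((((hasDerivAt_id y).add ((hasDerivAt_pow 3 y).div_const 3)).add
      (((hasDerivAt_pow 5 y).const_mul 2).div_const 15)).add
      (((hasDerivAt_pow 7 y).const_mul 17).div_const 315)).congr_deriv (by norm_num; ring))
    (fun y h => by have h8 : 0 ≤ y ^ 8 := by positivity
                   have h10 : 0 ≤ y ^ 10 := by positivity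
                   nlinarith) (by simp) hy0 hy1

/-- The square of the point where the Gaussian `exp (-t ^ 2 / 2)` takes the value `cos θ`. -/
noncomputable def gaussLevel (θ : ℝ) : ℝ := -(2 * log (cos θ))

theorem hasDerivAt_gaussLevel {θ : ℝ} (h0 : 0 ≤ θ) (h1 : θ < π / 2) :
    HasDerivAt gaussLevel (2 * tan θ) θ := by
  have hc : 0 < cos θ := cos_pos_of_mem_Ioo ⟨by linarith [pi_pos], h1⟩
  refine (((hasDerivAt_cos θ).log hc.ne').const_mul 2).neg.congr_deriv ?_
  rw [tan_eq_sin_div_cos]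
  ring

theorem taylor_le_gaussLevel {θ : ℝ} (h0 : 0 ≤ θ) (h1 : θ < π / 2) :
    θ ^ 2 * (1 + θ ^ 2 / 6 + 2 * θ ^ 4 / 45 + 17 * θ ^ 6 / 1260) ≤ gaussLevel θ := by
  have := nonneg_of_hasDerivAt
    (F := fun y => gaussLevel y - (y ^ 2 + y ^ 4 / 6 + 2 * y ^ 6 / 45 + 17 * y ^ 8 / 1260))
    (F' := fun y => 2 * (tan y - (y + y ^ 3 / 3 + 2 * y ^ 5 / 15 + 17 * y ^ 7 / 315)))
    (b := π / 2) (fun y h0 h1 => by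
      refine ((hasDerivAt_gaussLevel h0 h1).sub ((((hasDerivAt_pow 2 y).add
        ((hasDerivAt_pow 4 y).div_const 6)).add
        (((hasDerivAt_pow 6 y).const_mul 2).div_const 45)).add
        (((hasDerivAt_pow 8 y).const_mul 17).div_const 1260))).congr_deriv ?_
      norm_num; ring)
    (fun y h0 h1 => by linarith [taylor_le_tan h0 h1]) (by simp [gaussLevel]) h0 h1
  nlinarith

theorem tan_mul_le {θ : ℝ} (h0 : 0 < θ) (h1 : θ ≤ π / 3) {l : ℝ}
    (hl : l = 1 + θ ^ 2 / 6 + 2 * θ ^ 4 / 45 + 17 * θ ^ 6 / 1260) :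
    θ * tan θ * (l / 4 + 7 / 4) ≤ θ ^ 2 * (3 * l ^ 2 - l) := by
  have hpi := pi_lt_d4
  have hpi0 := pi_pos
  have hc : 0 < cos θ := cos_pos_of_mem_Ioo ⟨by linarith, by linarith⟩
  have hq : θ ^ 2 ≤ 11 / 10 := by nlinarith
  have hS := sin_le_taylor_five h0.le
  have hC := taylor_six_le_cos h0.le
  set q := θ ^ 2 with hqdef
  have hq0 : 0 ≤ q := by positivity
  rw [show θ ^ 4 = q ^ 2 by rw [hqdef]; ring, show θ ^ 6 = q ^ 3 by rw [hqdef]; ring] at *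
  have hl1 : 1 ≤ l := by rw [hl]; have : 0 ≤ q ^ 2 := by positivity
                         have : 0 ≤ q ^ 3 := by positivity
                         linarith
  have hpoly : (1 - q / 6 + q ^ 2 / 120) * (l / 4 + 7 / 4)
      ≤ (1 - q / 2 + q ^ 2 / 24 - q ^ 3 / 720) * (3 * l ^ 2 - l) := by
    have h2 : q ^ 2 ≤ (11 / 10) ^ 2 := pow_le_pow_left₀ hq0 hq 2
    have h3 : q ^ 3 ≤ (11 / 10) ^ 3 := pow_le_pow_left₀ hq0 hq 3
    have h4 : q ^ 4 ≤ (11 / 10) ^ 4 := pow_le_pow_left₀ hq0 hq 4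
    have h5 : q ^ 5 ≤ (11 / 10) ^ 5 := pow_le_pow_left₀ hq0 hq 5
    have h6 : q ^ 6 ≤ (11 / 10) ^ 6 := pow_le_pow_left₀ hq0 hq 6
    have h8 : q ^ 8 ≤ (11 / 10) ^ 8 := pow_le_pow_left₀ hq0 hq 8
    have h7 : 0 ≤ q ^ 7 := by positivity
    have hR : 0 ≤ 1 / 8 - 7 / 144 * q - 653 / 60480 * q ^ 2 - 529 / 21600 * q ^ 3
        - 3449 / 1814400 * q ^ 4 - 761 / 1270080 * q ^ 5 - 14299 / 95256000 * q ^ 6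
        + 3383 / 190512000 * q ^ 7 - 289 / 381024000 * q ^ 8 := by
      norm_num at h2 h3 h4 h5 h6 h8
      linarith
    have hD := mul_nonneg hq0 hR
    rw [hl]
    refine le_of_sub_nonneg (hD.trans_eq ?_)
    ring
  rw [tan_eq_sin_div_cos]
  rw [show θ * (sin θ / cos θ) * (l / 4 + 7 / 4) = θ * (sin θ * (l / 4 + 7 / 4)) / cos θ by ring,
    div_le_iff₀ hc]
  have e1 : sin θ * (l / 4 + 7 / 4) ≤ θ * (1 - q / 6 + q ^ 2 / 120) * (l / 4 + 7 / 4) := by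
    refine mul_le_mul_of_nonneg_right (hS.trans (le_of_eq ?_)) (by linarith)
    rw [hqdef]; ring
  have e2 : (1 - q / 2 + q ^ 2 / 24 - q ^ 3 / 720) * (3 * l ^ 2 - l) ≤ cos θ * (3 * l ^ 2 - l) :=
    mul_le_mul_of_nonneg_right hC (by nlinarith)
  calc θ * (sin θ * (l / 4 + 7 / 4))
      ≤ θ * (θ * ((1 - q / 6 + q ^ 2 / 120) * (l / 4 + 7 / 4))) := by
        refine mul_le_mul_of_nonneg_left (e1.trans_eq ?_) h0.le
        ring
    _ ≤ θ * (θ * (cos θ * (3 * l ^ 2 - l))) :=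
        mul_le_mul_of_nonneg_left (mul_le_mul_of_nonneg_left (hpoly.trans e2) h0.le) h0.le
    _ = q * (3 * l ^ 2 - l) * cos θ := by rw [hqdef]; ring

theorem gaussLevel_tan_ineq {θ : ℝ} (h0 : 0 < θ) (h1 : θ ≤ π / 3) :
    0 ≤ 3 * gaussLevel θ ^ 2 - θ ^ 2 * gaussLevel θ
      - θ * tan θ * (gaussLevel θ / 4 + 7 / 4 * θ ^ 2) := by
  have hpi0 := pi_pos
  have hpi := pi_lt_d4
  obtain ⟨l, hl⟩ : ∃ l, l = 1 + θ ^ 2 / 6 + 2 * θ ^ 4 / 45 + 17 * θ ^ 6 / 1260 := ⟨_, rfl⟩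
  have hL := taylor_le_gaussLevel h0.le (by linarith)
  have hT := tan_mul_le h0 h1 hl
  rw [← hl] at hL
  have ht : θ ≤ tan θ := le_tan h0.le (by linarith)
  have hq : θ ^ 2 ≤ 11 / 10 := by nlinarith
  have hl1 : 1 ≤ l := by rw [hl]; have : 0 ≤ θ ^ 2 := by positivity
                         have : 0 ≤ θ ^ 4 := by positivity
                         have : 0 ≤ θ ^ 6 := by positivity
                         linarith
  have hl2 : l ≤ 2 := by
    rw [hl]
    have : θ ^ 4 ≤ (11 / 10) ^ 2 := by nlinarith [sq_nonneg θ]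
    have : θ ^ 6 ≤ (11 / 10) ^ 3 := by
      rw [show θ ^ 6 = (θ ^ 2) ^ 3 by ring]; exact pow_le_pow_left₀ (sq_nonneg θ) hq 3
    linarith
  obtain ⟨e, he⟩ : ∃ e, gaussLevel θ = θ ^ 2 * l + e := ⟨gaussLevel θ - θ ^ 2 * l, by ring⟩
  rw [he] at hL ⊢
  have he0 : 0 ≤ e := by linarith
  have hT0 : 0 ≤ θ * tan θ := mul_nonneg h0.le (h0.le.trans ht)
  generalize θ * tan θ = T at *
  have hq0 : 0 ≤ θ ^ 2 := sq_nonneg θ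
  generalize θ ^ 2 = q at *
  have hTq : T / 4 ≤ 6 * (q * l) - q := by
    have h1 : T * 2 ≤ T * (l / 4 + 7 / 4) := mul_le_mul_of_nonneg_left (by linarith) hT0
    have h2 : q * (3 * l ^ 2 - l) ≤ q * (6 * l - 1) :=
      mul_le_mul_of_nonneg_left (by nlinarith) hq0
    nlinarith [mul_nonneg hq0 (sub_nonneg.2 hl1)]
  have e1 := mul_le_mul_of_nonneg_left hT hq0
  have e2 := mul_le_mul_of_nonneg_left hTq he0
  nlinarith [sq_nonneg e]

section

theorem sq_le_gaussLevel {θ : ℝ} (h0 : 0 ≤ θ) (h1 : θ < π / 2) : θ ^ 2 ≤ gaussLevel θ := by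
  have := taylor_le_gaussLevel h0 h1
  have : 0 ≤ θ ^ 2 * (θ ^ 2 / 6 + 2 * θ ^ 4 / 45 + 17 * θ ^ 6 / 1260) := by positivity
  nlinarith

theorem antitoneOn_level_diff {p : ℝ} (hp : 7 / 4 ≤ p) (hp2 : p ≤ 2) :
    AntitoneOn (fun θ : ℝ => (θ ^ (-p) - gaussLevel θ ^ (-(p / 2))) / θ) (Set.Ioc 0 (π / 3)) := by
  have hpi := pi_pos
  have hd : ∀ θ ∈ Set.Ioc (0 : ℝ) (π / 3), HasDerivAt
      (fun θ : ℝ => (θ ^ (-p) - gaussLevel θ ^ (-(p / 2))) / θ)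
      ((((-p) * θ ^ (-p - 1) - (2 * tan θ) * (-(p / 2)) * gaussLevel θ ^ (-(p / 2) - 1)) * θ
        - (θ ^ (-p) - gaussLevel θ ^ (-(p / 2))) * 1) / θ ^ 2) θ := by
    intro θ hθ
    have hθ2 : θ < π / 2 := by linarith [hθ.2]
    have hL := sq_le_gaussLevel hθ.1.le hθ2
    have hL0 : gaussLevel θ ≠ 0 := by have := pow_pos hθ.1 2; linarith
    exact ((hasDerivAt_rpow_const (Or.inl hθ.1.ne')).sub
      ((hasDerivAt_gaussLevel hθ.1.le hθ2).rpow_const (Or.inl hL0))).div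
      (hasDerivAt_id θ) hθ.1.ne'
  refine antitoneOn_of_deriv_nonpos (convex_Ioc 0 _)
    (fun θ hθ => (hd θ hθ).continuousAt.continuousWithinAt) ?_ ?_
  · rw [interior_Ioc]
    exact fun θ hθ => (hd θ ⟨hθ.1, hθ.2.le⟩).differentiableAt.differentiableWithinAt
  · rw [interior_Ioc]
    intro θ hθ
    rw [(hd θ ⟨hθ.1, hθ.2.le⟩).deriv]
    have h0 := hθ.1
    have hθ2 : θ < π / 2 := by linarith [hθ.2]
    have hL := sq_le_gaussLevel h0.le hθ2
    have hineq := gaussLevel_tan_ineq h0 hθ.2.le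
    have hq0 : 0 < θ ^ 2 := pow_pos h0 2
    have hT0 : 0 ≤ θ * tan θ := mul_nonneg h0.le (h0.le.trans (le_tan h0.le hθ2))
    have hqp : (θ ^ 2) ^ (p / 2) = θ ^ p := by
      rw [← rpow_two, ← rpow_mul h0.le]; ring_nf
    set L := gaussLevel θ
    have hLpos : 0 < L := hq0.trans_le hL
    refine div_nonpos_of_nonpos_of_nonneg ?_ hq0.le
    have e1 : θ ^ (-p - 1) * θ = θ ^ (-p) := by
      rw [← rpow_add_one h0.ne']; ring_nf
    have e2 : L ^ (-(p / 2) - 1) = L ^ (-(p / 2)) / L := rpow_sub_one hLpos.ne' _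
    have hρ : (θ ^ 2 / L) ^ (p / 2) ≤ 1 + (p / 2) * (θ ^ 2 / L - 1) := by
      have := rpow_one_add_le_one_add_mul_self (s := θ ^ 2 / L - 1) (p := p / 2)
        (by have : 0 ≤ θ ^ 2 / L := by positivity
            linarith) (by linarith) (by linarith)
      rwa [add_sub_cancel] at this
    rw [div_rpow hq0.le hLpos.le, hqp] at hρ
    have hmain : (1 + (p / 2) * (θ ^ 2 / L - 1)) * (1 + p * (θ * tan θ) / L) ≤ p + 1 := by
      generalize θ * tan θ = T at *
      generalize θ ^ 2 = q at *
      have h3 : 0 ≤ 3 * L ^ 2 - q * L - 2 * T * L + p * T * (L - q) := by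
        nlinarith [mul_nonneg (mul_nonneg hT0 (sub_nonneg.2 hL)) (sub_nonneg.2 hp)]
      rw [← sub_nonneg]
      have : p + 1 - (1 + (p / 2) * (q / L - 1)) * (1 + p * T / L)
          = (p / 2) * (3 * L ^ 2 - q * L - 2 * T * L + p * T * (L - q)) / L ^ 2 := by
        field_simp
        ring
      rw [this]
      positivity
    have hb : θ ^ p / L ^ (p / 2) * (1 + p * (θ * tan θ) / L) ≤ p + 1 :=
      (mul_le_mul_of_nonneg_right hρ (by positivity)).trans hmain
    rw [rpow_neg h0.le] at e1 ⊢
    rw [rpow_neg hLpos.le] at e2 ⊢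
    have hθp : 0 < θ ^ p := rpow_pos_of_pos h0 p
    have hLp : 0 < L ^ (p / 2) := rpow_pos_of_pos hLpos _
    have : (-p * θ ^ (-p - 1) - 2 * tan θ * -(p / 2) * L ^ (-(p / 2) - 1)) * θ
        - ((θ ^ p)⁻¹ - (L ^ (p / 2))⁻¹) * 1
        = (θ ^ p / L ^ (p / 2) * (1 + p * (θ * tan θ) / L) - (p + 1)) / θ ^ p := by
      rw [show ∀ x y : ℝ, (-p * θ ^ (-p - 1) - x * y * L ^ (-(p / 2) - 1)) * θ
        = -p * (θ ^ (-p - 1) * θ) - x * y * L ^ (-(p / 2) - 1) * θ from fun x y => by ring, e1, e2]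
      field_simp
      ring
    rw [this]
    exact div_nonpos_of_nonpos_of_nonneg (by linarith) hθp.le

/-- The neighbourhoods of radius `θ` of the positive multiples of `π`. -/
def cosPeaks (θ : ℝ) : Set ℝ := ⋃ k : ℕ, Set.Icc (π * (k + 1) - θ) (π * (k + 1) + θ)

theorem measurableSet_cosPeaks (θ : ℝ) : MeasurableSet (cosPeaks θ) :=
  MeasurableSet.iUnion fun _ => measurableSet_Icc

theorem abs_cos_sub_nat_mul_pi (t : ℝ) (k : ℕ) : |cos (t - k * π)| = |cos t| := by
  rw [cos_sub_nat_mul_pi, abs_mul, abs_pow]; simp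

theorem mem_cosPeaks_iff {θ t : ℝ} (h0 : 0 < θ) (h1 : θ < π / 2) :
    t ∈ cosPeaks θ ↔ θ < t ∧ cos θ ≤ |cos t| := by
  have hpi := pi_pos
  have hper : ∀ k : ℕ, |cos (t - k * π)| = |cos t| := fun k => abs_cos_sub_nat_mul_pi t k
  simp only [cosPeaks, Set.mem_iUnion, Set.mem_Icc]
  constructor
  · rintro ⟨k, hk1, hk2⟩
    have hk : (0 : ℝ) ≤ k := k.cast_nonneg
    refine ⟨by nlinarith, ?_⟩
    rw [← hper (k + 1)]
    push_cast
    refine le_trans ?_ (le_abs_self _)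
    rw [← cos_abs (t - (k + 1) * π)]
    exact cos_le_cos_of_nonneg_of_le_pi (abs_nonneg _) (by linarith)
      (abs_le.2 ⟨by linarith, by linarith⟩)
  · rintro ⟨ht, hc⟩
    obtain ⟨k, hk⟩ : ∃ k : ℕ, |t - k * π| ≤ π / 2 := by
      refine ⟨⌊t / π + 1 / 2⌋₊, ?_⟩
      have hn : 0 ≤ t / π + 1 / 2 := by have := h0.trans ht; positivity
      have f1 := Nat.floor_le hn
      have f2 := Nat.lt_floor_add_one (t / π + 1 / 2)
      have ht' : t / π * π = t := by field_simp
      rw [abs_le]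
      constructor <;> nlinarith
    have hle : |t - k * π| ≤ θ := by
      by_contra! hlt
      have h2 : cos |t - k * π| < cos θ := cos_lt_cos_of_nonneg_of_le_pi h0.le (by linarith) hlt
      rw [cos_abs] at h2
      rw [← hper k, abs_of_nonneg (cos_nonneg_of_mem_Icc ⟨by linarith [(abs_le.1 hk).1],
        (abs_le.1 hk).2⟩)] at hc
      linarith
    rcases k with _ | k
    · simp only [Nat.cast_zero, zero_mul, sub_zero] at hle
      linarith [le_abs_self t]
    · refine ⟨k, ?_⟩
      push_cast at hle
      rw [abs_le] at hle
      constructor <;> linarith [hle.1, hle.2]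

variable {p : ℝ}

theorem powMeasure_Icc {a b : ℝ} (hp : 0 < p) (ha : 0 < a) (hab : a ≤ b) :
    powMeasure p (Set.Icc a b) = ENNReal.ofReal ((a ^ (-p) - b ^ (-p)) / p) := by
  have hb := ha.trans_le hab
  have hac : powMeasure p (Set.Icc a b) = powMeasure p (Set.Ioc a b) :=
    measure_congr (Ioc_ae_eq_Icc' (by
      refine withDensity_absolutelyContinuous _ _ ?_
      exact le_antisymm ((Measure.restrict_apply_le _ _).trans (by simp)) bot_le)).symm
  rw [hac, ← Set.Ioi_sdiff_Ioi, measure_sdiff (Set.Ioi_subset_Ioi hab)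
    measurableSet_Ioi.nullMeasurableSet (by rw [powMeasure_Ioi hp hb]; simp),
    powMeasure_Ioi hp ha, powMeasure_Ioi hp hb, ← ENNReal.ofReal_sub _ (by positivity), sub_div]

theorem rpow_sub_rpow_smul_le {m θ c : ℝ} (hp : 0 < p) (h0 : 0 ≤ θ) (hm : θ < m) (hc0 : 0 ≤ c)
    (hc1 : c ≤ 1) :
    (m - c * θ) ^ (-p) - (m + c * θ) ^ (-p) ≤ c * ((m - θ) ^ (-p) - (m + θ) ^ (-p)) := by
  have hconv : ConvexOn ℝ (Set.Icc 0 θ) fun x => (m - x) ^ (-p) - (m + x) ^ (-p) := by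
    have hsub : ∀ x ∈ Set.Icc 0 θ, 0 < m - x := fun x hx => by linarith [hx.2]
    have hadd : ∀ x ∈ Set.Icc 0 θ, 0 < m + x := fun x hx => by linarith [hx.1]
    have d1 : ∀ q, ∀ x ∈ Set.Icc 0 θ, HasDerivAt (fun x => (m - x) ^ q) (-1 * q * (m - x) ^ (q - 1)) x :=
      fun q x hx => ((hasDerivAt_id x).const_sub m).rpow_const (Or.inl (hsub x hx).ne')
    have d2 : ∀ q, ∀ x ∈ Set.Icc 0 θ, HasDerivAt (fun x => (m + x) ^ q) (1 * q * (m + x) ^ (q - 1)) x :=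
      fun q x hx => ((hasDerivAt_id x).const_add m).rpow_const (Or.inl (hadd x hx).ne')
    refine convexOn_of_hasDerivWithinAt2_nonneg (convex_Icc 0 θ)
      (f' := fun x => -1 * (-p) * (m - x) ^ (-p - 1) - 1 * (-p) * (m + x) ^ (-p - 1))
      (f'' := fun x => -1 * (-p) * (-1 * (-p - 1) * (m - x) ^ (-p - 1 - 1))
        - 1 * (-p) * (1 * (-p - 1) * (m + x) ^ (-p - 1 - 1)))
      (fun x hx => ((d1 _ x hx).sub (d2 _ x hx)).continuousAt.continuousWithinAt) ?_ ?_ ?_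
    · intro x hx
      have hx := interior_subset hx
      exact ((d1 _ x hx).sub (d2 _ x hx)).hasDerivWithinAt
    · intro x hx
      have hx := interior_subset hx
      exact (((d1 _ x hx).const_mul _).sub ((d2 _ x hx).const_mul _)).hasDerivWithinAt
    · intro x hx
      have hx := interior_subset hx
      have : (m + x) ^ (-p - 1 - 1) ≤ (m - x) ^ (-p - 1 - 1) :=
        rpow_le_rpow_of_nonpos (hsub x hx) (by linarith [hx.1]) (by linarith)
      have h2 : 0 < p * (p + 1) := by positivity
      nlinarith
  have := hconv.2 (Set.left_mem_Icc.2 h0) (Set.right_mem_Icc.2 h0) (show 0 ≤ 1 - c by linarith)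
    hc0 (by ring)
  simpa using this

theorem powMeasure_cosPeaks_smul_le {θ c : ℝ} (hp : 0 < p) (h0 : 0 < θ) (h1 : θ < π / 2)
    (hc0 : 0 ≤ c) (hc1 : c ≤ 1) :
    powMeasure p (cosPeaks (c * θ)) ≤ ENNReal.ofReal c * powMeasure p (cosPeaks θ) := by
  have hpi := pi_pos
  have hdisj : ∀ {η : ℝ}, η < π / 2 → Pairwise (Function.onFun Disjoint
      fun k : ℕ => Set.Icc (π * (k + 1) - η) (π * (k + 1) + η)) := by
    intro η hη i j hij
    rw [Function.onFun, Set.disjoint_left]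
    intro x hxi hxj
    rcases Nat.lt_or_gt_of_ne hij with h | h
    · have : (i : ℝ) + 1 ≤ j := by exact_mod_cast h
      nlinarith [hxi.2, hxj.1]
    · have : (j : ℝ) + 1 ≤ i := by exact_mod_cast h
      nlinarith [hxj.2, hxi.1]
  have hcθ : c * θ ≤ θ := by nlinarith
  rw [cosPeaks, cosPeaks, measure_iUnion (hdisj (by linarith)) fun _ => measurableSet_Icc,
    measure_iUnion (hdisj h1) fun _ => measurableSet_Icc, ← ENNReal.tsum_mul_left]
  refine ENNReal.tsum_le_tsum fun k => ?_
  have hk : (0 : ℝ) ≤ k := k.cast_nonneg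
  have hm : π ≤ π * (k + 1) := by nlinarith
  have hcθ0 : 0 ≤ c * θ := by positivity
  rw [powMeasure_Icc hp (by linarith) (by linarith), powMeasure_Icc hp (by linarith) (by linarith),
    ← ENNReal.ofReal_mul hc0]
  refine ENNReal.ofReal_le_ofReal ?_
  rw [← mul_div_assoc]
  exact div_le_div_of_nonneg_right (rpow_sub_rpow_smul_le hp h0.le (by linarith) hc0 hc1) hp.le

theorem gaussian_lt_cos_iff {θ t : ℝ} (h0 : 0 < θ) (h1 : θ < π / 2) (ht : 0 < t) :
    exp (-(t ^ 2 / 2)) < cos θ ↔ √(gaussLevel θ) < t := by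
  have hc : 0 < cos θ := cos_pos_of_mem_Ioo ⟨by linarith, h1⟩
  rw [← lt_log_iff_exp_lt hc, sqrt_lt' ht, gaussLevel]
  constructor <;> intro h <;> linarith

theorem powMeasure_gaussian_lt {θ : ℝ} (hp : 0 < p) (h0 : 0 < θ) (h1 : θ < π / 2) :
    powMeasure p {t | exp (-(t ^ 2 / 2)) < cos θ}
      = ENNReal.ofReal (gaussLevel θ ^ (-(p / 2)) / p) := by
  have hL : 0 < gaussLevel θ := (pow_pos h0 2).trans_le (sq_le_gaussLevel h0.le h1)
  have : powMeasure p {t | exp (-(t ^ 2 / 2)) < cos θ} = powMeasure p (Set.Ioi √(gaussLevel θ)) := by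
    refine measure_congr ?_
    filter_upwards [powMeasure_ae_pos p] with t ht
    exact propext (gaussian_lt_cos_iff h0 h1 ht)
  rw [this, powMeasure_Ioi hp (sqrt_pos.2 hL), sqrt_eq_rpow, ← rpow_mul hL.le]
  ring_nf

theorem powMeasure_abs_cos_lt_add {θ : ℝ} (hp : 0 < p) (h0 : 0 < θ) (h1 : θ < π / 2) :
    powMeasure p {t | |cos t| < cos θ} + powMeasure p (cosPeaks θ)
      = ENNReal.ofReal (θ ^ (-p) / p) := by
  have hpi := pi_pos
  rw [← powMeasure_Ioi hp h0, ← measure_sdiff_add_inter (Set.Ioi θ) (measurableSet_cosPeaks θ)]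
  congr 1
  · refine measure_congr ?_
    filter_upwards [powMeasure_ae_pos p] with t ht
    refine propext ?_
    change |cos t| < cos θ ↔ θ < t ∧ t ∉ cosPeaks θ
    rw [mem_cosPeaks_iff h0 h1]
    constructor
    · intro h
      refine ⟨?_, fun h' => by linarith [h'.2]⟩
      by_contra! hle
      have := cos_le_cos_of_nonneg_of_le_pi ht.le (by linarith) hle
      linarith [le_abs_self (cos t)]
    · rintro ⟨h2, h3⟩
      by_contra! h4
      exact h3 ⟨h2, h4⟩
  · congr 1
    rw [eq_comm, Set.inter_eq_right]
    intro t ht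
    exact ((mem_cosPeaks_iff h0 h1).1 ht).1

theorem gaussian_le_cos_iff {θ : ℝ} (hp : 0 < p) (h0 : 0 < θ) (h1 : θ < π / 2) :
    powMeasure p {t | exp (-(t ^ 2 / 2)) < cos θ} ≤ powMeasure p {t | |cos t| < cos θ} ↔
      powMeasure p (cosPeaks θ)
        ≤ ENNReal.ofReal ((θ ^ (-p) - gaussLevel θ ^ (-(p / 2))) / p) := by
  have hL : 0 < gaussLevel θ := (pow_pos h0 2).trans_le (sq_le_gaussLevel h0.le h1)
  have hadd := powMeasure_abs_cos_lt_add hp h0 h1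
  have hfin : powMeasure p (cosPeaks θ) ≠ ⊤ := fun h => by simp [h] at hadd
  rw [sub_div, ENNReal.ofReal_sub _ (by positivity), ← hadd, ← powMeasure_gaussian_lt hp h0 h1]
  constructor
  · intro h
    refine ENNReal.le_sub_of_add_le_left (ne_top_of_le_ne_top ?_ h) (add_le_add_left h _)
    intro h'
    simp [h'] at hadd
  · intro h
    have hle : powMeasure p {t | exp (-(t ^ 2 / 2)) < cos θ}
        ≤ powMeasure p {t | |cos t| < cos θ} + powMeasure p (cosPeaks θ) := by
      rw [hadd, powMeasure_gaussian_lt hp h0 h1]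
      refine ENNReal.ofReal_le_ofReal (div_le_div_of_nonneg_right ?_ hp.le)
      have := rpow_le_rpow_of_nonpos (pow_pos h0 2) (sq_le_gaussLevel h0.le h1)
        (show -(p / 2) ≤ 0 by linarith)
      rwa [← rpow_two, ← rpow_mul h0.le, show 2 * -(p / 2) = -p by ring] at this
    have := add_le_of_le_tsub_right_of_le hle h
    rw [add_comm] at this
    exact (ENNReal.add_le_add_iff_right hfin).1 this

/-- Below the level `1 / 2` the crossing condition propagates. -/
theorem gaussian_le_cos_of_le {θ₁ θ₂ : ℝ} (hp : 7 / 4 ≤ p) (hp2 : p ≤ 2) (h0 : 0 < θ₁)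
    (h12 : θ₁ ≤ θ₂) (h2 : θ₂ ≤ π / 3)
    (h : powMeasure p {t | exp (-(t ^ 2 / 2)) < cos θ₂} ≤ powMeasure p {t | |cos t| < cos θ₂}) :
    powMeasure p {t | exp (-(t ^ 2 / 2)) < cos θ₁} ≤ powMeasure p {t | |cos t| < cos θ₁} := by
  have hpi := pi_pos
  have hθ₂ : 0 < θ₂ := h0.trans_le h12
  have hp0 : 0 < p := by linarith
  rw [gaussian_le_cos_iff hp0 hθ₂ (by linarith)] at h
  rw [gaussian_le_cos_iff hp0 h0 (by linarith)]
  have hs := powMeasure_cosPeaks_smul_le (c := θ₁ / θ₂) hp0 hθ₂ (by linarith) (by positivity)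
    ((div_le_one hθ₂).2 h12)
  rw [div_mul_cancel₀ _ hθ₂.ne'] at hs
  refine hs.trans ((mul_le_mul_right h _).trans ?_)
  rw [← ENNReal.ofReal_mul (by positivity)]
  refine ENNReal.ofReal_le_ofReal ?_
  have hanti := antitoneOn_level_diff hp hp2 ⟨h0, h12.trans h2⟩ ⟨hθ₂, h2⟩ h12
  simp only at hanti
  rw [← mul_div_assoc]
  refine div_le_div_of_nonneg_right ?_ hp0.le
  rw [le_div_iff₀ h0] at hanti
  refine le_trans (le_of_eq ?_) hanti
  ring

end

section

variable {p : ℝ}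

theorem powMeasure_le_of_subset_Iic {τ : ℝ} {B : Set ℝ} (hp2 : p ≤ 2) (hB : MeasurableSet B)
    (h : B ⊆ Set.Iic τ) :
    powMeasure p B ≤ ENNReal.ofReal (τ ^ (2 - p)) * powMeasure 2 B := by
  rw [powMeasure, powMeasure, withDensity_apply _ hB, withDensity_apply _ hB,
    Measure.restrict_restrict hB, ← lintegral_const_mul _ (measurable_powDensity 2)]
  refine setLIntegral_mono' (hB.inter measurableSet_Ioi) fun t ht => ?_
  have ht0 : 0 < t := ht.2
  have hτ : t ≤ τ := h ht.1
  rw [← ENNReal.ofReal_mul (rpow_nonneg (ht0.le.trans hτ) _)]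
  refine ENNReal.ofReal_le_ofReal ?_
  rw [show -p - 1 = (2 - p) + (-2 - 1) by ring, rpow_add ht0]
  gcongr

theorem powMeasure_ge_of_subset_Ioi {τ : ℝ} {B : Set ℝ} (hτ : 0 < τ) (hp2 : p ≤ 2)
    (hB : MeasurableSet B) (h : B ⊆ Set.Ioi τ) :
    ENNReal.ofReal (τ ^ (2 - p)) * powMeasure 2 B ≤ powMeasure p B := by
  rw [powMeasure, powMeasure, withDensity_apply _ hB, withDensity_apply _ hB,
    Measure.restrict_restrict hB, ← lintegral_const_mul _ (measurable_powDensity 2)]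
  refine setLIntegral_mono' (hB.inter measurableSet_Ioi) fun t ht => ?_
  have ht0 : 0 < t := ht.2
  have hτt : τ < t := h ht.1
  rw [← ENNReal.ofReal_mul (rpow_nonneg hτ.le _)]
  refine ENNReal.ofReal_le_ofReal ?_
  rw [show -p - 1 = (2 - p) + (-2 - 1) by ring, rpow_add ht0]
  gcongr

/-- A set that loses to a half-line for the exponent `2` also loses for every smaller exponent. -/
theorem powMeasure_le_Ioi_of_two {τ : ℝ} {B : Set ℝ} (hτ : 0 < τ) (hp2 : p ≤ 2)
    (hB : MeasurableSet B) (h : powMeasure 2 B ≤ powMeasure 2 (Set.Ioi τ)) :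
    powMeasure p B ≤ powMeasure p (Set.Ioi τ) := by
  have hfin : powMeasure 2 (Set.Ioi τ ∩ B) ≠ ⊤ :=
    ne_top_of_le_ne_top (by rw [powMeasure_Ioi two_pos hτ]; simp)
      (measure_mono Set.inter_subset_left)
  rw [← measure_sdiff_add_inter B (measurableSet_Ioi (a := τ)),
    ← measure_sdiff_add_inter (Set.Ioi τ) hB, Set.inter_comm B] at h ⊢
  rw [ENNReal.add_le_add_iff_right hfin] at h
  gcongr ?_ + _
  refine (powMeasure_le_of_subset_Iic hp2 (hB.diff measurableSet_Ioi) (τ := τ) fun t ht => ?_).trans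
    ((mul_le_mul_right h _).trans
      (powMeasure_ge_of_subset_Ioi hτ hp2 (measurableSet_Ioi.diff hB) Set.sdiff_subset))
  simpa using ht.2

theorem abs_cos_lt_subset {θ : ℝ} (h0 : 0 < θ) (h1 : θ < π / 2) {t : ℝ} (ht0 : 0 < t)
    (ht : |cos t| < cos θ) :
    ∃ k : ℕ, t ∈ Set.Icc (π / 2 + π * k - (π / 2 - θ)) (π / 2 + π * k + (π / 2 - θ)) := by
  have hpi := pi_pos
  have hθt : θ < t := by
    by_contra! hle
    have := cos_le_cos_of_nonneg_of_le_pi ht0.le (by linarith) hle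
    linarith [le_abs_self (cos t)]
  have hnot : t ∉ cosPeaks θ := fun h => by linarith [((mem_cosPeaks_iff h0 h1).1 h).2]
  simp only [cosPeaks, Set.mem_iUnion, Set.mem_Icc, not_exists, not_and_or, not_le] at hnot
  refine ⟨⌊t / π⌋₊, ?_⟩
  have f1 := Nat.floor_le (show 0 ≤ t / π by positivity)
  have f2 := Nat.lt_floor_add_one (t / π)
  have ht' : t / π * π = t := by field_simp
  have hn := hnot ⌊t / π⌋₊
  constructor
  · rcases Nat.eq_zero_or_pos ⌊t / π⌋₊ with h | h
    · rw [h]; push_cast; linarith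
    · obtain ⟨j, hj⟩ := Nat.exists_eq_add_of_le' h
      have := hnot j
      rw [hj] at f1 ⊢
      push_cast at f1 ⊢
      rcases this with h | h
      · nlinarith
      · linarith
  · rcases hn with h | h
    · linarith
    · nlinarith

theorem powMeasure_two_abs_cos_lt_le {θ : ℝ} (h0 : 0 < θ) (h1 : θ < π / 2) :
    powMeasure 2 {t | |cos t| < cos θ} ≤ ENNReal.ofReal
      ((θ ^ (-2 : ℝ) - (π - θ) ^ (-2 : ℝ)) / 2 + (π / 2 - θ) / π ^ 3) := by
  have hpi := pi_pos
  set δ := π / 2 - θ with hδ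
  have hδ0 : 0 < δ := by linarith
  have hae : powMeasure 2 {t | |cos t| < cos θ} ≤ powMeasure 2
      (⋃ k : ℕ, Set.Icc (π / 2 + π * k - δ) (π / 2 + π * k + δ)) := by
    refine measure_mono_ae ?_
    filter_upwards [powMeasure_ae_pos 2] with t ht0 ht
    exact Set.mem_iUnion.2 (abs_cos_lt_subset h0 h1 ht0 ht)
  refine hae.trans ((measure_iUnion_le _).trans ?_)
  rw [tsum_eq_zero_add' ENNReal.summable, ENNReal.ofReal_add]
  · refine add_le_add ?_ ?_
    · rw [powMeasure_Icc two_pos (by push_cast; linarith) (by linarith)]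
      refine le_of_eq ?_
      congr 3 <;> congr 1 <;> push_cast <;> linarith
    · have hterm : ∀ k : ℕ, powMeasure 2 (Set.Icc (π / 2 + π * (k + 1 : ℕ) - δ)
          (π / 2 + π * (k + 1 : ℕ) + δ)) ≤ ENNReal.ofReal (2 * δ / π) *
            powMeasure 2 (Set.Ioc (π * (k + 1 : ℕ)) (π * (k + 1 : ℕ) + π)) := by
        intro k
        have hk : π ≤ π * (k + 1 : ℕ) := by
          have : (0 : ℝ) ≤ k := k.cast_nonneg
          push_cast; nlinarith
        generalize π * ((k + 1 : ℕ) : ℝ) = u at hk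
        have hc : 2 * δ / π ≤ 1 := by rw [div_le_one hpi]; linarith
        have hcm : 2 * δ / π * (π / 2) = δ := by field_simp
        have := rpow_sub_rpow_smul_le (p := 2) (m := π / 2 + u) (θ := π / 2) (c := 2 * δ / π)
          two_pos (by linarith) (by linarith) (by positivity) hc
        rw [hcm, show π / 2 + u - π / 2 = u by ring, show π / 2 + u + π / 2 = u + π by ring] at this
        rw [powMeasure_Icc two_pos (by linarith) (by linarith), ← Set.Ioi_sdiff_Ioi,
          measure_sdiff (Set.Ioi_subset_Ioi (by linarith)) measurableSet_Ioi.nullMeasurableSet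
            (by rw [powMeasure_Ioi two_pos (by linarith)]; simp),
          powMeasure_Ioi two_pos (by linarith), powMeasure_Ioi two_pos (by linarith),
          ← ENNReal.ofReal_sub _ (div_nonneg (rpow_nonneg (by linarith) _) zero_le_two),
          ← ENNReal.ofReal_mul (by positivity)]
        refine ENNReal.ofReal_le_ofReal ?_
        rw [← sub_div, ← mul_div_assoc]
        linarith
      refine (ENNReal.tsum_le_tsum hterm).trans ?_
      rw [ENNReal.tsum_mul_left]
      have hdisj : Pairwise (Function.onFun Disjoint
          fun k : ℕ => Set.Ioc (π * (k + 1 : ℕ)) (π * (k + 1 : ℕ) + π)) := by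
        intro i j hij
        rw [Function.onFun, Set.disjoint_left]
        intro x hxi hxj
        rcases Nat.lt_or_gt_of_ne hij with h | h
        · have : (i : ℝ) + 1 ≤ j := by exact_mod_cast h
          have h1 := hxi.2
          have h2 := hxj.1
          push_cast at h1 h2
          nlinarith
        · have : (j : ℝ) + 1 ≤ i := by exact_mod_cast h
          have h1 := hxj.2
          have h2 := hxi.1
          push_cast at h1 h2
          nlinarith
      rw [← measure_iUnion hdisj fun _ => measurableSet_Ioc]
      have hsub : (⋃ k : ℕ, Set.Ioc (π * (k + 1 : ℕ)) (π * (k + 1 : ℕ) + π)) ⊆ Set.Ioi π := by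
        refine Set.iUnion_subset fun k x hx => ?_
        have : (0 : ℝ) ≤ k := k.cast_nonneg
        have h1 := hx.1
        push_cast at h1
        exact lt_of_le_of_lt (by nlinarith) h1
      refine (mul_le_mul_right (measure_mono hsub) _).trans (le_of_eq ?_)
      rw [powMeasure_Ioi two_pos hpi, ← ENNReal.ofReal_mul (by positivity)]
      congr 1
      rw [rpow_neg hpi.le, rpow_two]
      field_simp
  · refine div_nonneg (sub_nonneg.2 ?_) zero_le_two
    exact rpow_le_rpow_of_nonpos h0 (by linarith) (by norm_num)
  · positivity

theorem level_poly_le {v : ℝ} (h0 : 0 ≤ v) (h1 : v ≤ 1) :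
    (1296 + (9 - v ^ 2) ^ 2) * (0.6932 * v + (1 - v ^ 2) / 2) * 2 ≤ 29.6 * (9 - v ^ 2) ^ 2 := by
  obtain ⟨w, rfl⟩ : ∃ w, v = 1 - w := ⟨1 - v, by ring⟩
  have hw0 : 0 ≤ w := by linarith
  have hw1 : w ≤ 1 := by linarith
  have h2 : 0 ≤ w ^ 2 * (1001 - 74 * w) := mul_nonneg (sq_nonneg w) (by linarith)
  have h5 : 0 ≤ w ^ 4 * (18 - 5 * w) := mul_nonneg (by positivity) (by linarith)
  nlinarith [pow_nonneg hw0 2, pow_nonneg hw0 3, pow_nonneg hw0 4, pow_nonneg hw0 5,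
    pow_nonneg hw0 6]

theorem gaussLevel_mul_le_one {θ : ℝ} (h0 : π / 3 ≤ θ) (h1 : θ < π / 2) :
    ((θ ^ (-2 : ℝ) - (π - θ) ^ (-2 : ℝ)) + 2 * (π / 2 - θ) / π ^ 3) * gaussLevel θ ≤ 1 := by
  have hpi := pi_pos
  obtain ⟨v, hv⟩ : ∃ v, v = 6 * (π / 2 - θ) / π := ⟨_, rfl⟩
  have hv0 : 0 < v := by rw [hv]; exact div_pos (by linarith) hpi
  have hv1 : v ≤ 1 := by rw [hv, div_le_one hpi]; linarith
  have hθ : θ = π / 6 * (3 - v) := by rw [hv]; field_simp; ring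
  have hcos : v / 2 ≤ cos θ := by
    have := strictConcaveOn_sin_Icc.concaveOn.2 (x := 0) (y := π / 6) ⟨le_rfl, hpi.le⟩
      ⟨by positivity, by linarith⟩ (show 0 ≤ 1 - v by linarith) hv0.le (by ring)
    simp only [smul_eq_mul, mul_zero, sin_zero, zero_add, sin_pi_div_six] at this
    rw [← sin_pi_div_two_sub, show π / 2 - θ = v * (π / 6) by rw [hθ]; ring]
    linarith
  have hlog : gaussLevel θ ≤ 2 * (log 2 - log v) := by
    have := log_le_log (by positivity) hcos
    rw [log_div hv0.ne' two_ne_zero] at this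
    rw [gaussLevel]; linarith
  have hvlog : v * (log 2 - log v) ≤ 0.6932 * v + (1 - v ^ 2) / 2 := by
    have h2 := log_two_lt_d9
    have h3 := log_le_half_sub_inv (x := v⁻¹) ((one_le_inv₀ hv0).2 hv1)
    rw [log_inv, inv_inv] at h3
    have h4 := mul_le_mul_of_nonneg_left h3 hv0.le
    have : v * ((v⁻¹ - v) / 2) = (1 - v ^ 2) / 2 := by field_simp
    nlinarith
  have hR : (θ ^ (-2 : ℝ) - (π - θ) ^ (-2 : ℝ)) + 2 * (π / 2 - θ) / π ^ 3
      = v * (1296 + (9 - v ^ 2) ^ 2) / (3 * π ^ 2 * (9 - v ^ 2) ^ 2) := by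
    have a1 : 0 < 3 - v := by linarith
    have a2 : 0 < 3 + v := by linarith
    have e : π - θ = π / 6 * (3 + v) := by rw [hθ]; ring
    rw [e, show 9 - v ^ 2 = (3 - v) * (3 + v) by ring, hθ, rpow_neg (by positivity),
      rpow_neg (by positivity), rpow_two, rpow_two]
    field_simp
    ring
  rw [hR]
  have h9 : 0 < 9 - v ^ 2 := by nlinarith
  have hπ : 29.6 ≤ 3 * π ^ 2 := by nlinarith [pi_gt_d4]
  refine (mul_le_mul_of_nonneg_left hlog (by positivity)).trans ?_
  rw [div_mul_eq_mul_div, div_le_one (by positivity)]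
  calc v * (1296 + (9 - v ^ 2) ^ 2) * (2 * (log 2 - log v))
      = (1296 + (9 - v ^ 2) ^ 2) * (v * (log 2 - log v)) * 2 := by ring
    _ ≤ (1296 + (9 - v ^ 2) ^ 2) * (0.6932 * v + (1 - v ^ 2) / 2) * 2 := by gcongr
    _ ≤ 29.6 * (9 - v ^ 2) ^ 2 := level_poly_le hv0.le hv1
    _ ≤ 3 * π ^ 2 * (9 - v ^ 2) ^ 2 := by gcongr

/-- At levels below `1 / 2` the Gaussian sublevel sets are the larger ones. -/
theorem powMeasure_abs_cos_lt_le {θ : ℝ} (hp2 : p ≤ 2) (h0 : π / 3 ≤ θ)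
    (h1 : θ < π / 2) :
    powMeasure p {t | |cos t| < cos θ} ≤ powMeasure p {t | exp (-(t ^ 2 / 2)) < cos θ} := by
  have hpi := pi_pos
  have hθ : 0 < θ := by linarith
  have hL : 0 < gaussLevel θ := (pow_pos hθ 2).trans_le (sq_le_gaussLevel hθ.le h1)
  have key : ∀ q, powMeasure q {t | exp (-(t ^ 2 / 2)) < cos θ}
      = powMeasure q (Set.Ioi √(gaussLevel θ)) := by
    refine fun q => measure_congr ?_
    filter_upwards [powMeasure_ae_pos q] with t ht
    exact propext (gaussian_lt_cos_iff hθ h1 ht)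
  rw [key]
  refine powMeasure_le_Ioi_of_two (sqrt_pos.2 hL) hp2
    (measurableSet_lt (by fun_prop) (by fun_prop)) ?_
  rw [← key, powMeasure_gaussian_lt two_pos hθ h1]
  refine (powMeasure_two_abs_cos_lt_le hθ h1).trans (ENNReal.ofReal_le_ofReal ?_)
  have := gaussLevel_mul_le_one h0 h1
  rw [show -((2 : ℝ) / 2) = -1 by norm_num, rpow_neg_one]
  rw [← le_div_iff₀ hL, one_div] at this
  linarith [show 2 * (π / 2 - θ) / π ^ 3 = 2 * ((π / 2 - θ) / π ^ 3) by ring]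

end

section

variable {p : ℝ}

/-- The distribution functions of `|cos t|` and `exp (-t² / 2)` cross once. -/
theorem exists_crossing_level (hp : 7 / 4 ≤ p) (hp2 : p ≤ 2) : ∃ y₀ : ℝ, 0 < y₀ ∧
    (∀ y, 0 < y → y < 1 → y < y₀ →
      powMeasure p {t | |cos t| < y} ≤ powMeasure p {t | exp (-(t ^ 2 / 2)) < y}) ∧
    (∀ y, 0 < y → y < 1 → y₀ < y →
      powMeasure p {t | exp (-(t ^ 2 / 2)) < y} ≤ powMeasure p {t | |cos t| < y}) := by
  have hcos : ∀ {y : ℝ}, 0 < y → y < 1 → cos (arccos y) = y := fun h0 h1 =>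
    cos_arccos (by linarith) h1.le
  set S : Set ℝ := {y | 1 / 2 < y ∧
    (y < 1 → powMeasure p {t | exp (-(t ^ 2 / 2)) < y} ≤ powMeasure p {t | |cos t| < y})} with hS
  have hne : S.Nonempty := ⟨1, by norm_num, fun h => absurd h (lt_irrefl 1)⟩
  have hbdd : BddBelow S := ⟨1 / 2, fun y hy => hy.1.le⟩
  have harc : arccos (1 / 2) = π / 3 := by
    rw [← cos_pi_div_three]
    exact arccos_cos (by linarith [pi_pos]) (by linarith [pi_pos])
  refine ⟨sInf S, lt_of_lt_of_le (by norm_num) (le_csInf hne fun y hy => hy.1.le), ?_, ?_⟩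
  · intro y h0 h1 hy
    rcases le_or_gt y (1 / 2) with h | h
    · have := powMeasure_abs_cos_lt_le hp2 (θ := arccos y)
        (by rw [← harc]; exact antitone_arccos h) (arccos_lt_pi_div_two.2 h0)
      rwa [hcos h0 h1] at this
    · by_contra! hlt
      exact absurd (csInf_le hbdd ⟨h, fun _ => hlt.le⟩) (not_le.2 hy)
  · intro y h0 h1 hy
    obtain ⟨z, hz, hzy⟩ := exists_lt_of_csInf_lt hne hy
    have hz0 : 0 < z := by linarith [hz.1]
    have hz1 : z < 1 := hzy.trans h1
    have := gaussian_le_cos_of_le hp hp2 (arccos_pos.2 h1) (antitone_arccos hzy.le)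
      (by rw [← harc]; exact antitone_arccos hz.1.le) (by rw [hcos hz0 hz1]; exact hz.2 hz1)
    rwa [hcos h0 h1] at this

theorem integral_one_sub_gaussian_rpow (hp0 : 0 < p) (hp2 : p < 2) {s : ℝ} (hs : 0 < s) :
    Integrable (fun t => 1 - exp (-(t ^ 2 / 2)) ^ s) (powMeasure p) ∧
    ∫ t, (1 - exp (-(t ^ 2 / 2)) ^ s) ∂powMeasure p
      = s ^ (p / 2) * (gaussMoment p * cosConst p) := by
  have he : ∀ t : ℝ, exp (-(t ^ 2 / 2)) ^ s = exp (-((√s * t) ^ 2 / 2)) := by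
    intro t
    rw [← exp_mul, mul_pow, sq_sqrt hs.le]; ring_nf
  simp_rw [he]
  constructor
  · refine integrable_powMeasure hp0 hp2 (by fun_prop) (c := 1 / 2 * s) (d := 1) (fun t => ?_)
      fun t => ?_ <;> rw [abs_of_nonneg (one_sub_gaussian_mem _).1]
    · refine (one_sub_gaussian_mem _).2.1.trans (le_of_eq ?_)
      rw [mul_pow, sq_sqrt hs.le]; ring
    · exact (one_sub_gaussian_mem _).2.2
  · rw [integral_powMeasure_comp_mul (fun t => 1 - exp (-(t ^ 2 / 2))) (sqrt_pos.2 hs),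
      integral_one_sub_gaussian hp0 hp2, sqrt_eq_rpow, ← rpow_mul hs.le]
    ring_nf

theorem integrable_one_sub_abs_cos_rpow (hp0 : 0 < p) (hp2 : p < 2) {s : ℝ} (hs : 1 ≤ s) :
    Integrable (fun t => 1 - |cos t| ^ s) (powMeasure p) := by
  have h0 : ∀ t : ℝ, 0 ≤ 1 - |cos t| ^ s := fun t =>
    sub_nonneg.2 (rpow_le_one (abs_nonneg _) (abs_cos_le_one t) (by linarith))
  refine integrable_powMeasure hp0 hp2 (Measurable.const_sub (by fun_prop) _) (c := s / 2) (d := 1)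
    (fun t => ?_) fun t => ?_ <;> rw [abs_of_nonneg (h0 t)]
  · have h1 := one_add_mul_self_le_rpow_one_add (s := |cos t| - 1) (by linarith [abs_nonneg (cos t)])
      hs
    rw [add_sub_cancel] at h1
    have h2 := one_sub_sq_div_two_le_cos (x := t)
    have h3 := le_abs_self (cos t)
    nlinarith
  · linarith [rpow_nonneg (abs_nonneg (cos t)) s]

theorem integral_one_sub_abs_cos_sq (hp0 : 0 < p) :
    ∫ t, (1 - |cos t| ^ (2 : ℝ)) ∂powMeasure p = 2 ^ (p - 1) * cosConst p := by
  have h : ∀ t : ℝ, 1 - |cos t| ^ (2 : ℝ) = (1 / 2) * (1 - cos (2 * t)) := by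
    intro t
    rw [rpow_two, sq_abs, cos_two_mul]; ring
  simp_rw [h]
  rw [integral_const_mul, integral_one_sub_cos_mul hp0, abs_two, rpow_sub_one two_ne_zero]
  ring

theorem le_integral_one_sub_abs_cos_rpow (hp : 7 / 4 ≤ p) (hp2 : p < 2)
    (hG : gaussMoment p ≤ 2 ^ (p / 2 - 1)) {s : ℝ} (hs : 2 ≤ s) :
    s ^ (p / 2) * (gaussMoment p * cosConst p) ≤ ∫ t, (1 - |cos t| ^ s) ∂powMeasure p := by
  have hp0 : 0 < p := by linarith
  have hs0 : 0 < s := by linarith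
  have hK := cosConst_pos hp0 hp2
  have hg0 : ∀ t : ℝ, exp (-(t ^ 2 / 2)) ≤ 1 := fun t => by linarith [(one_sub_gaussian_mem t).1]
  obtain ⟨y₀, hy₀, h1, h2⟩ := exists_crossing_level hp hp2.le
  have hcint : ∀ {r : ℝ}, 2 ≤ r → ∫⁻ t, ENNReal.ofReal ((1 - |cos t| ^ r) / r) ∂powMeasure p
      = ENNReal.ofReal ((∫ t, (1 - |cos t| ^ r) ∂powMeasure p) / r) := by
    intro r hr
    rw [← integral_div, ofReal_integral_eq_lintegral_ofReal
      ((integrable_one_sub_abs_cos_rpow hp0 hp2 (by linarith)).div_const r)]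
    exact Eventually.of_forall fun t => div_nonneg (sub_nonneg.2
      (rpow_le_one (abs_nonneg _) (abs_cos_le_one t) (by linarith))) (by linarith)
  have hgint : ∀ {r : ℝ}, 2 ≤ r → ∫⁻ t, ENNReal.ofReal ((1 - exp (-(t ^ 2 / 2)) ^ r) / r)
      ∂powMeasure p = ENNReal.ofReal (r ^ (p / 2) * (gaussMoment p * cosConst p) / r) := by
    intro r hr
    have := integral_one_sub_gaussian_rpow hp0 hp2 (s := r) (by linarith)
    rw [← this.2, ← integral_div, ofReal_integral_eq_lintegral_ofReal (this.1.div_const r)]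
    exact Eventually.of_forall fun t => div_nonneg (sub_nonneg.2
      (rpow_le_one (exp_pos _).le (hg0 t) (by linarith))) (by linarith)
  have key := lintegral_one_sub_rpow_le_of_crossing (μ := powMeasure p) (f := fun t => |cos t|)
    (g := fun t => exp (-(t ^ 2 / 2))) hs (by fun_prop) (fun t => abs_nonneg _)
    abs_cos_le_one (by fun_prop) (fun t => (exp_pos _).le) hg0 hy₀ h1 h2
    (by rw [hcint le_rfl]; simp) (by
      rw [hcint le_rfl, hgint le_rfl, integral_one_sub_abs_cos_sq hp0]
      refine ENNReal.ofReal_le_ofReal (div_le_div_of_nonneg_right ?_ zero_le_two)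
      rw [← mul_assoc]
      refine mul_le_mul_of_nonneg_right ?_ hK.le
      calc (2 : ℝ) ^ (p / 2) * gaussMoment p ≤ 2 ^ (p / 2) * 2 ^ (p / 2 - 1) := by gcongr
        _ = 2 ^ (p - 1) := by rw [← rpow_add two_pos]; ring_nf)
  rw [hcint hs, hgint hs, ENNReal.ofReal_le_ofReal_iff] at key
  · exact (div_le_div_iff_of_pos_right hs0).1 key
  · exact div_nonneg (integral_nonneg fun t => sub_nonneg.2
      (rpow_le_one (abs_nonneg _) (abs_cos_le_one t) (by linarith))) hs0.le

end

section

variable {p : ℝ}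

theorem le_integral_sq_mul (hp : 7 / 4 ≤ p) (hp2 : p < 2) (hG : gaussMoment p ≤ 2 ^ (p / 2 - 1))
    {a : ℝ} (ha : 2 * a ^ 2 ≤ 1) :
    Integrable (fun t => a ^ 2 * (1 - |cos (a * t)| ^ (a ^ 2)⁻¹)) (powMeasure p) ∧
    a ^ 2 * (gaussMoment p * cosConst p)
      ≤ ∫ t, a ^ 2 * (1 - |cos (a * t)| ^ (a ^ 2)⁻¹) ∂powMeasure p := by
  have hp0 : 0 < p := by linarith
  rcases eq_or_ne a 0 with rfl | ha0
  · simp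
  have ha2 : 0 < a ^ 2 := by positivity
  have hs : 2 ≤ (a ^ 2)⁻¹ := by
    rw [le_inv_comm₀ two_pos ha2]; linarith
  have habs : ∀ t, cos (a * t) = cos (|a| * t) := by
    intro t
    rcases abs_choice a with h | h <;> rw [h]
    rw [neg_mul, cos_neg]
  have hap : 0 < |a| := abs_pos.2 ha0
  simp_rw [habs]
  constructor
  · refine Integrable.const_mul ?_ _
    refine integrable_powMeasure hp0 hp2 (Measurable.const_sub (by fun_prop) _)
      (c := (a ^ 2)⁻¹ / 2 * a ^ 2) (d := 1) (fun t => ?_) fun t => ?_ <;>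
      rw [abs_of_nonneg (sub_nonneg.2
        (rpow_le_one (abs_nonneg _) (abs_cos_le_one _) (by linarith)))]
    · have h1 := one_add_mul_self_le_rpow_one_add (s := |cos (|a| * t)| - 1)
        (by linarith [abs_nonneg (cos (|a| * t))]) (show 1 ≤ (a ^ 2)⁻¹ by linarith)
      rw [add_sub_cancel] at h1
      have h2 := one_sub_sq_div_two_le_cos (x := |a| * t)
      rw [mul_pow, sq_abs] at h2
      have h3 := le_abs_self (cos (|a| * t))
      have h4 : (a ^ 2)⁻¹ * (1 - |cos (|a| * t)|) ≤ (a ^ 2)⁻¹ * (a ^ 2 * t ^ 2 / 2) := by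
        gcongr; linarith
      linarith
    · linarith [rpow_nonneg (abs_nonneg (cos (|a| * t))) (a ^ 2)⁻¹]
  · rw [integral_const_mul]
    refine mul_le_mul_of_nonneg_left ?_ ha2.le
    rw [integral_powMeasure_comp_mul (fun t => 1 - |cos t| ^ (a ^ 2)⁻¹) hap]
    have h := mul_le_mul_of_nonneg_left
      (le_integral_one_sub_abs_cos_rpow hp hp2 hG hs) (rpow_nonneg hap.le p)
    rw [← mul_assoc] at h
    refine le_trans (le_of_eq ?_) h
    have : |a| ^ p * ((a ^ 2)⁻¹) ^ (p / 2) = 1 := by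
      rw [inv_rpow ha2.le, ← sq_abs, ← rpow_two, ← rpow_mul hap.le, mul_div_cancel₀ _ two_ne_zero]
      exact mul_inv_cancel₀ (rpow_pos_of_pos hap p).ne'
    rw [this, one_mul]

theorem sum_sq_mul_le_one_sub_prod (l : List ℝ) (h1 : sumSq l = 1) (t : ℝ) :
    ∑ i : Fin l.length, l[i.1] ^ 2 * (1 - |cos (l[i.1] * t)| ^ (l[i.1] ^ 2)⁻¹)
      ≤ 1 - (l.map fun a => cos (a * t)).prod := by
  have hw : ∑ i : Fin l.length, l[i.1] ^ 2 = 1 := by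
    rw [← h1, sumSq]; exact Fin.sum_univ_fun_getElem l (· ^ 2)
  have h := geom_mean_le_arith_mean_weighted Finset.univ (fun i : Fin l.length => l[i.1] ^ 2)
    (fun i => |cos (l[i.1] * t)| ^ (l[i.1] ^ 2)⁻¹) (fun i _ => sq_nonneg _) hw
    (fun i _ => by positivity)
  have e : ∀ a : ℝ, (|cos (a * t)| ^ (a ^ 2)⁻¹) ^ (a ^ 2) = |cos (a * t)| := by
    intro a
    rcases eq_or_ne a 0 with rfl | ha
    · simp
    · rw [← rpow_mul (abs_nonneg _), inv_mul_cancel₀ (by positivity), rpow_one]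
  simp only [e] at h
  rw [← Finset.abs_prod, Fin.prod_univ_fun_getElem l (fun a => cos (a * t))] at h
  simp only [mul_sub, mul_one, Finset.sum_sub_distrib, hw]
  linarith [le_abs_self (l.map fun a => cos (a * t)).prod]

theorem gaussMoment_le_radMoment (hp : 7 / 4 ≤ p) (hp2 : p < 2)
    (hG : gaussMoment p ≤ 2 ^ (p / 2 - 1)) (l : List ℝ) (h1 : sumSq l = 1)
    (hl : ∀ a ∈ l, 2 * a ^ 2 ≤ 1) : gaussMoment p ≤ radMoment p l 0 := by
  have hp0 : 0 < p := by linarith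
  have hK := cosConst_pos hp0 hp2
  obtain ⟨hi, he⟩ := integral_one_sub_radAvg hp0 hp2 l 0
  simp only [zero_mul, cos_zero, one_mul] at hi he
  refine le_of_mul_le_mul_right ?_ hK
  rw [← he]
  have hterm := fun i : Fin l.length => le_integral_sq_mul hp hp2 hG (hl _ (l.getElem_mem i.2))
  have hw : ∑ i : Fin l.length, l[i.1] ^ 2 = 1 := by
    rw [← h1, sumSq]; exact Fin.sum_univ_fun_getElem l (· ^ 2)
  calc gaussMoment p * cosConst p
      = ∑ i : Fin l.length, l[i.1] ^ 2 * (gaussMoment p * cosConst p) := by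
        rw [← Finset.sum_mul, hw, one_mul]
    _ ≤ ∑ i : Fin l.length, ∫ t, l[i.1] ^ 2 * (1 - |cos (l[i.1] * t)| ^ (l[i.1] ^ 2)⁻¹)
          ∂powMeasure p := Finset.sum_le_sum fun i _ => (hterm i).2
    _ = ∫ t, ∑ i : Fin l.length, l[i.1] ^ 2 * (1 - |cos (l[i.1] * t)| ^ (l[i.1] ^ 2)⁻¹)
          ∂powMeasure p := (integral_finsetSum _ fun i _ => (hterm i).1).symm
    _ ≤ _ := integral_mono (integrable_finsetSum _ fun i _ => (hterm i).1) hi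
        (sum_sq_mul_le_one_sub_prod l h1)

theorem list_map_inv_mul_cancel {c : ℝ} (hc : c ≠ 0) (l : List ℝ) :
    (l.map (c⁻¹ * ·)).map (c * ·) = l := by
  rw [List.map_map]; convert List.map_id l using 2; ext x; simp [hc]

theorem gaussMoment_mul_le_radMoment (hp : 7 / 4 ≤ p) (hp2 : p < 2)
    (hG : gaussMoment p ≤ 2 ^ (p / 2 - 1)) (l : List ℝ) :
    gaussMoment p * (sumSq l) ^ (p / 2) ≤ radMoment p l 0 := by
  have hp0 : 0 < p := by linarith
  refine rpow_sumSq_le_radMoment hp0 hp2.le (gaussMoment_pos hp0).le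
    (fun a ha => symPow_le_radMoment_singleton hp0 hp2.le hG ha) (fun l hl => ?_) l
  rcases (sumSq_nonneg l).eq_or_lt with h0 | h0
  · rw [← h0, zero_rpow (by linarith), mul_zero]
    exact radMoment_nonneg _ _ _
  · have hc : 0 < √(sumSq l) := sqrt_pos.2 h0
    have hc2 := sq_sqrt h0.le
    have key := gaussMoment_le_radMoment hp hp2 hG (l.map ((√(sumSq l))⁻¹ * ·))
      (by rw [sumSq_smul, inv_pow, hc2, inv_mul_cancel₀ h0.ne']) (by
        intro a ha
        obtain ⟨b, hb, rfl⟩ := List.mem_map.1 ha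
        rw [mul_pow, inv_pow, hc2, mul_left_comm, inv_mul_le_iff₀ h0, mul_one]
        exact hl b hb)
    have h2 := radMoment_smul p √(sumSq l) (l.map ((√(sumSq l))⁻¹ * ·)) 0
    rw [list_map_inv_mul_cancel hc.ne', mul_zero] at h2
    rw [h2, abs_of_pos hc, sqrt_eq_rpow, ← rpow_mul h0.le, mul_comm, one_div_mul_eq_div]
    rw [sqrt_eq_rpow] at key
    gcongr

theorem gaussMoment_le_of_Gamma_le (h : Gamma ((p + 1) / 2) ≤ √π / 2) :
    gaussMoment p ≤ 2 ^ (p / 2 - 1) := by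
  have hpi : 0 < √π := sqrt_pos.2 pi_pos
  rw [gaussMoment, rpow_sub_one two_ne_zero, div_le_iff₀ hpi]
  calc (2 : ℝ) ^ (p / 2) * Gamma ((p + 1) / 2) ≤ 2 ^ (p / 2) * (√π / 2) := by gcongr
    _ = _ := by ring

theorem rpow_le_radMoment_of_Gamma_eq {q : ℝ} (hq1 : 1 < q) (hq2 : q < 2)
    (hq : Gamma ((q + 1) / 2) = √π / 2) (l : List ℝ) :
    2 ^ (q / 2 - 1) * (sumSq l) ^ (q / 2) ≤ radMoment q l 0 := by
  have h := gaussMoment_mul_le_radMoment (seven_quarters_le hq1 hq2 hq) hq2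
    (gaussMoment_le_of_Gamma_le hq.le) l
  have hpi : 0 < √π := sqrt_pos.2 pi_pos
  rwa [show gaussMoment q = 2 ^ (q / 2 - 1) by
    rw [gaussMoment, hq, rpow_sub_one two_ne_zero]; field_simp] at h

/-- Interpolation between the exponents `r ≤ q` and `2`. -/
theorem rpow_le_radMoment_of_le {q r : ℝ} (hr : 0 < r) (hrq : r ≤ q) (hq2 : q < 2)
    (hq : ∀ l : List ℝ, 2 ^ (q / 2 - 1) * (sumSq l) ^ (q / 2) ≤ radMoment q l 0) (l : List ℝ) :
    2 ^ (r / 2 - 1) * (sumSq l) ^ (r / 2) ≤ radMoment r l 0 := by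
  have half : ∀ l : List ℝ, sumSq l = 1 / 2 → 1 / 2 ≤ radMoment r l 0 := by
    intro l hl
    have h1 := hq l
    rw [hl, rpow_sub_one two_ne_zero, one_div, inv_rpow zero_le_two, div_mul_eq_mul_div,
      mul_inv_cancel₀ (rpow_pos_of_pos two_pos _).ne'] at h1
    obtain ⟨c, hc⟩ : ∃ c, c = (2 - q) / (2 - r) := ⟨_, rfl⟩
    have hc0 : 0 < c := by rw [hc]; exact div_pos (by linarith) (by linarith)
    have hc1 : c ≤ 1 := by rw [hc, div_le_one (by linarith)]; linarith
    have hcq : r * c + 2 * (1 - c) = q := by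
      have : c * (2 - r) = 2 - q := by rw [hc]; exact div_mul_cancel₀ _ (by linarith)
      linarith
    have hmono := radAvg_mono (f := fun s : ℝ => |s| ^ q)
      (g := fun s : ℝ => c * |s| ^ r + (1 - c) * s ^ 2) (fun s => by
        have := geom_mean_le_arith_mean2_weighted hc0.le (sub_nonneg.2 hc1)
          (rpow_nonneg (abs_nonneg s) r) (sq_nonneg s) (by ring)
        rw [← sq_abs, ← rpow_two, ← rpow_mul (abs_nonneg s), ← rpow_mul (abs_nonneg s),
          ← rpow_add_of_nonneg (abs_nonneg s) (by positivity)
            (mul_nonneg zero_le_two (sub_nonneg.2 hc1)), hcq, rpow_two, sq_abs] at this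
        exact this) l 0
    rw [radAvg_add, radAvg_const_mul, radAvg_const_mul, radAvg_sq, hl] at hmono
    simp only [radMoment] at h1 ⊢
    refine le_of_mul_le_mul_left ?_ hc0
    linarith
  rcases (sumSq_nonneg l).eq_or_lt with h0 | h0
  · rw [← h0, zero_rpow (by linarith), mul_zero]
    exact radMoment_nonneg _ _ _
  · obtain ⟨c, hc⟩ : ∃ c, c = √(2 * sumSq l) := ⟨_, rfl⟩
    have hc0 : 0 < c := by rw [hc]; exact sqrt_pos.2 (by linarith)
    have hc2 : c ^ 2 = 2 * sumSq l := by rw [hc]; exact sq_sqrt (by linarith)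
    have key := half (l.map (c⁻¹ * ·)) (by
      rw [sumSq_smul, inv_pow, hc2]; field_simp)
    have h2 := radMoment_smul r c (l.map (c⁻¹ * ·)) 0
    rw [list_map_inv_mul_cancel hc0.ne', mul_zero] at h2
    have hcr : c ^ r = 2 ^ (r / 2) * sumSq l ^ (r / 2) := by
      rw [← mul_rpow zero_le_two h0.le, ← hc2, ← rpow_two, ← rpow_mul hc0.le,
        mul_div_cancel₀ _ two_ne_zero]
    rw [h2, abs_of_pos hc0, rpow_sub_one two_ne_zero]
    have := mul_le_mul_of_nonneg_left key (rpow_nonneg hc0.le r)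
    refine le_trans (le_of_eq ?_) this
    rw [hcr]; ring

theorem khintchineA_nonneg (r : ℝ) (hr : 0 < r) : 0 ≤ khintchineA r := by
  have := Gamma_pos_of_pos (show 0 < (r + 1) / 2 by linarith)
  unfold khintchineA
  split_ifs <;> positivity

/-- The sharp Khintchine inequality. -/
theorem rpow_sumSq_le_khintchineA {r : ℝ} (h1 : 1 < r) (h2 : r ≤ 2) (l : List ℝ) :
    (sumSq l) ^ (r / 2) ≤ khintchineA r ^ r * radMoment r l 0 := by
  have hr0 : 0 < r := by linarith
  obtain ⟨q₀, hq₀⟩ := exists_Gamma_eq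
  have hbdd : BddBelow {p : ℝ | 1 < p ∧ p < 2 ∧ Gamma ((p + 1) / 2) = √π / 2} :=
    ⟨1, fun p hp => hp.1.le⟩
  have hP0 : khintchineP0 ≤ q₀ := csInf_le hbdd hq₀
  have hpi : 0 < √π := sqrt_pos.2 pi_pos
  unfold khintchineA
  split_ifs with ha hb
  · have h := rpow_le_radMoment_of_le hr0 (ha.trans hP0) hq₀.2.1
      (rpow_le_radMoment_of_Gamma_eq hq₀.1 hq₀.2.1 hq₀.2.2) l
    have e : ((2 : ℝ) ^ (1 / r - 1 / 2)) ^ r * 2 ^ (r / 2 - 1) = 1 := by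
      rw [← rpow_mul zero_le_two, ← rpow_add two_pos]
      convert rpow_zero (2 : ℝ) using 2
      field_simp
      ring
    calc (sumSq l) ^ (r / 2)
        = ((2 : ℝ) ^ (1 / r - 1 / 2)) ^ r * (2 ^ (r / 2 - 1) * (sumSq l) ^ (r / 2)) := by
          rw [← mul_assoc, e, one_mul]
      _ ≤ _ := by gcongr
  · obtain ⟨q, hq, hqr⟩ := exists_lt_of_csInf_lt ⟨q₀, hq₀⟩ (not_le.1 ha)
    have h7 := seven_quarters_le hq.1 hq.2.1 hq.2.2
    have h := gaussMoment_mul_le_radMoment (h7.trans hqr.le) hb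
      (gaussMoment_le_of_Gamma_le (Gamma_le_of_mem_Icc hq.1 hq.2.1 hq.2.2 hqr.le hb.le)) l
    have hG := Gamma_pos_of_pos (show 0 < (r + 1) / 2 by linarith)
    have e : ((1 / √2) * (Gamma ((r + 1) / 2) / √π) ^ (-(1 / r))) ^ r * gaussMoment r = 1 := by
      rw [mul_rpow (by positivity) (by positivity), ← rpow_mul (by positivity),
        show -(1 / r) * r = -1 by field_simp, rpow_neg_one, one_div, inv_rpow (by positivity),
        sqrt_eq_rpow, ← rpow_mul zero_le_two, one_div_mul_eq_div, gaussMoment, inv_div]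
      field_simp
    calc (sumSq l) ^ (r / 2)
        = ((1 / √2) * (Gamma ((r + 1) / 2) / √π) ^ (-(1 / r))) ^ r
          * (gaussMoment r * (sumSq l) ^ (r / 2)) := by rw [← mul_assoc, e, one_mul]
      _ ≤ _ := by gcongr
  · have : r = 2 := le_antisymm h2 (not_lt.1 hb)
    subst this
    have := radAvg_sq l 0
    simp only [radMoment, rpow_two, sq_abs, this, one_pow, one_mul, div_self (two_ne_zero (α := ℝ)), rpow_one]
    linarith

end

theorem map_radAvg_le {E ι : Type*} [AddCommGroup E] (N : (ι → ℝ) → ℝ)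
    (hN : ∀ u v : ι → ℝ, N (fun j => (u j + v j) / 2) ≤ (N u + N v) / 2)
    (g : ι → E → ℝ) (l : List E) (x : E) :
    N (fun j => radAvg (g j) l x) ≤ radAvg (fun y => N fun j => g j y) l x := by
  induction l generalizing x with
  | nil => exact le_rfl
  | cons v l ih =>
    simp only [radAvg]
    refine (hN _ _).trans ?_
    linarith [ih (x + v), ih (x - v)]

theorem Lp_midpoint_le {ι : Type*} [Fintype ι] {q : ℝ} (hq : 1 ≤ q) (u v : ι → ℝ) :
    (∑ j, |(u j + v j) / 2| ^ q) ^ (1 / q)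
      ≤ ((∑ j, |u j| ^ q) ^ (1 / q) + (∑ j, |v j| ^ q) ^ (1 / q)) / 2 := by
  have hq0 : q ≠ 0 := by linarith
  have hhalf : ∀ w : ι → ℝ, (∑ j, |w j / 2| ^ q) ^ (1 / q) = (∑ j, |w j| ^ q) ^ (1 / q) / 2 := by
    intro w
    have : ∀ j, |w j / 2| ^ q = |w j| ^ q / 2 ^ q := fun j => by
      rw [abs_div, abs_two, div_rpow (abs_nonneg _) zero_le_two]
    simp_rw [this]
    rw [← Finset.sum_div, div_rpow (by positivity) (by positivity), ← rpow_mul zero_le_two,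
      mul_one_div_cancel hq0, rpow_one]
  have := Real.Lp_add_le Finset.univ (fun j => u j / 2) (fun j => v j / 2) hq
  rw [hhalf, hhalf] at this
  simp only [← add_div] at this ⊢
  exact this

theorem sumSq_ofFn {n : ℕ} (c : Fin n → ℝ) : sumSq (List.ofFn c) = ∑ i, c i ^ 2 := by
  rw [sumSq, List.map_ofFn, List.sum_ofFn]; rfl

/-- The Khintchine inequality with values in a Hilbert space. -/
theorem rpow_sum_sq_le_radAvg {ι : Type*} [Fintype ι] {r : ℝ} (h1 : 1 < r) (h2 : r ≤ 2) {n : ℕ}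
    (c : Fin n → ι → ℝ) :
    (∑ j, ∑ i, c i j ^ 2) ^ (r / 2)
      ≤ khintchineA r ^ r * radAvg (fun x : ι → ℝ => (∑ j, x j ^ 2) ^ (r / 2)) (List.ofFn c) 0 := by
  have hr0 : 0 < r := by linarith
  have hA : 0 ≤ khintchineA r ^ r := rpow_nonneg (khintchineA_nonneg r hr0) _
  have hq : 1 ≤ 2 / r := by rwa [le_div_iff₀ hr0, one_mul]
  have hq0 : 0 < 2 / r := by linarith
  have hterm : ∀ j, (∑ i, c i j ^ 2) ^ (r / 2)
      ≤ khintchineA r ^ r * radAvg (fun x : ι → ℝ => |x j| ^ r) (List.ofFn c) 0 := by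
    intro j
    have := rpow_sumSq_le_khintchineA h1 h2 (List.ofFn fun i => c i j)
    rw [sumSq_ofFn, radMoment] at this
    have h3 := radAvg_comp (Pi.evalAddMonoidHom (fun _ : ι => ℝ) j) (fun s : ℝ => |s| ^ r)
      (List.ofFn c) 0
    simp only [Pi.evalAddMonoidHom_apply, List.map_ofFn, Pi.zero_apply] at h3
    rw [h3]
    exact this
  have hnn : ∀ j, 0 ≤ radAvg (fun x : ι → ℝ => |x j| ^ r) (List.ofFn c) 0 := by
    intro j
    have := radAvg_mono (f := fun _ : ι → ℝ => (0 : ℝ)) (g := fun x => |x j| ^ r)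
      (fun s => by positivity) (List.ofFn c) 0
    rwa [radAvg_const] at this
  have hjensen := map_radAvg_le (fun u : ι → ℝ => (∑ j, |u j| ^ (2 / r)) ^ (1 / (2 / r)))
    (Lp_midpoint_le hq) (fun j (x : ι → ℝ) => |x j| ^ r) (List.ofFn c) 0
  have e : ∀ x : ι → ℝ, (∑ j, |(|x j| ^ r)| ^ (2 / r)) ^ (1 / (2 / r))
      = (∑ j, x j ^ 2) ^ (r / 2) := by
    intro x
    rw [one_div_div]
    congr 1
    refine Finset.sum_congr rfl fun j _ => ?_
    rw [abs_of_nonneg (by positivity), ← rpow_mul (abs_nonneg _), mul_div_cancel₀ _ hr0.ne',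
      rpow_two, sq_abs]
  simp only [e] at hjensen
  refine le_trans ?_ (mul_le_mul_of_nonneg_left hjensen hA)
  rw [one_div_div]
  have hA2 : khintchineA r ^ r = ((khintchineA r ^ r) ^ (2 / r)) ^ (r / 2) := by
    rw [← rpow_mul hA, div_mul_div_cancel₀ hr0.ne', div_self two_ne_zero, rpow_one]
  rw [hA2, ← mul_rpow (by positivity) (by positivity), Finset.mul_sum]
  refine rpow_le_rpow (by positivity) (Finset.sum_le_sum fun j _ => ?_) (by positivity)
  rw [abs_of_nonneg (hnn j), ← mul_rpow hA (hnn j)]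
  refine le_trans (le_of_eq ?_) (rpow_le_rpow (by positivity) (hterm j) hq0.le)
  rw [← rpow_mul (by positivity), div_mul_div_comm, mul_comm r 2, div_self (by positivity), rpow_one]

theorem exists_signs_sum_rpow_le {κ ι : Type*} [Fintype κ] [Fintype ι] {r : ℝ} (h1 : 1 < r)
    (h2 : r ≤ 2) {n : ℕ} (c : Fin n → κ → ι → ℝ) :
    ∃ ε : Fin n → ℝ, (∀ i, |ε i| ≤ 1) ∧
      ∑ a, (∑ j, ∑ i, c i a j ^ 2) ^ (r / 2)
        ≤ khintchineA r ^ r * ∑ a, (∑ j, (∑ i, ε i * c i a j) ^ 2) ^ (r / 2) := by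
  have hA : 0 ≤ khintchineA r ^ r := rpow_nonneg (khintchineA_nonneg r (by linarith)) _
  obtain ⟨ε, hε, hle⟩ := exists_signs_radAvg_le
    (fun x : κ → ι → ℝ => ∑ a, (∑ j, x a j ^ 2) ^ (r / 2)) c 0
  refine ⟨fun i => ε i, fun i => ?_, ?_⟩
  · rcases hε i with h | h <;> simp [h]
  · have hsum : ∑ a, (∑ j, ∑ i, c i a j ^ 2) ^ (r / 2) ≤ khintchineA r ^ r *
        radAvg (fun x : κ → ι → ℝ => ∑ a, (∑ j, x a j ^ 2) ^ (r / 2)) (List.ofFn c) 0 := by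
      rw [radAvg_finset_sum, Finset.mul_sum]
      refine Finset.sum_le_sum fun a _ => ?_
      have h3 := radAvg_comp (Pi.evalAddMonoidHom (fun _ : κ => ι → ℝ) a)
        (fun x : ι → ℝ => (∑ j, x j ^ 2) ^ (r / 2)) (List.ofFn c) 0
      simp only [Pi.evalAddMonoidHom_apply, List.map_ofFn, Pi.zero_apply] at h3
      rw [h3]
      exact rpow_sum_sq_le_radAvg h1 h2 fun i => c i a
    refine hsum.trans ((mul_le_mul_of_nonneg_left hle hA).trans (le_of_eq ?_))
    simp [Finset.sum_apply]

theorem exists_cube_sum_rpow_le {κ : Type*} [Fintype κ] {r : ℝ} (h1 : 1 < r) (h2 : r ≤ 2)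
    {n : ℕ} (m : ℕ) {ι : Type} [Fintype ι]
    (T : κ → ι → MultilinearMap ℝ (fun _ : Fin m => (Fin n → ℝ)) ℝ) :
    ∃ y : Fin m → Fin n → ℝ, (∀ k i, |y k i| ≤ 1) ∧
      ∑ a, (∑ j, ∑ i : Fin m → Fin n, T a j (fun k => Pi.single (i k) 1) ^ 2) ^ (r / 2)
        ≤ (khintchineA r ^ r) ^ m * ∑ a, (∑ j, T a j y ^ 2) ^ (r / 2) := by
  have hA : 0 ≤ khintchineA r ^ r := rpow_nonneg (khintchineA_nonneg r (by linarith)) _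
  induction m generalizing ι with
  | zero =>
    refine ⟨0, fun k => k.elim0, le_of_eq ?_⟩
    rw [pow_zero, one_mul]
    refine Finset.sum_congr rfl fun a _ => ?_
    congr 1
    refine Finset.sum_congr rfl fun j _ => ?_
    rw [Fintype.sum_unique]
    congr 2
    exact Subsingleton.elim _ _
  | succ m ih =>
    obtain ⟨y, hy, hle⟩ := ih (ι := ι × Fin n)
      fun a j => (T a j.1).curryLeft (Pi.single j.2 1)
    obtain ⟨ε, hε, hle2⟩ := exists_signs_sum_rpow_le h1 h2 (κ := κ) (ι := ι)
      fun i a j => (T a j).curryLeft (Pi.single i 1) y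
    refine ⟨Fin.cons ε y, fun k => Fin.cases hε hy k, ?_⟩
    have e1 : ∀ a j, ∑ i : Fin (m + 1) → Fin n, T a j (fun k => Pi.single (i k) 1) ^ 2
        = ∑ i₁ : Fin n, ∑ i : Fin m → Fin n,
          (T a j).curryLeft (Pi.single i₁ 1) (fun k => Pi.single (i k) 1) ^ 2 := by
      intro a j
      rw [← Fintype.sum_prod_type', ← (Fin.consEquiv fun _ => Fin n).sum_comp]
      refine Finset.sum_congr rfl fun i _ => ?_
      rw [MultilinearMap.curryLeft_apply]
      congr 2
      funext k
      refine Fin.cases ?_ (fun k => ?_) k <;> simp [Fin.consEquiv]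
    have e2 : ∀ a j, ∑ i, ε i * (T a j).curryLeft (Pi.single i 1) y = T a j (Fin.cons ε y) := by
      intro a j
      rw [← MultilinearMap.curryLeft_apply]
      conv_rhs => rw [← Finset.univ_sum_single ε, map_sum]
      rw [sum_apply]
      refine Finset.sum_congr rfl fun i _ => ?_
      rw [← smul_eq_mul, ← smul_apply, ← map_smul, ← Pi.single_smul,
        smul_eq_mul, mul_one]
    simp only [e1]
    simp only [Fintype.sum_prod_type] at hle
    refine hle.trans ?_
    rw [pow_succ, mul_assoc]
    refine mul_le_mul_of_nonneg_left (hle2.trans (le_of_eq ?_)) (by positivity)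
    simp only [e2]

theorem abs_le_one_of_linfNorm_le {n : ℕ} {x : Fin n → ℝ} (h : linfNorm x ≤ 1) (i : Fin n) :
    |x i| ≤ 1 :=
  (le_ciSup (f := fun i => |x i|) (Set.finite_range _).bddAbove i).trans h

theorem abs_le_one_of_lpNorm_le {n : ℕ} {p : ℝ} (hp : 0 < p) {x : Fin n → ℝ}
    (h : lpNorm p x ≤ 1) (i : Fin n) : |x i| ≤ 1 := by
  refine le_trans ?_ h
  calc |x i| = (|x i| ^ p) ^ (1 / p) := by
        rw [← rpow_mul (abs_nonneg _), mul_one_div_cancel hp.ne', rpow_one]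
    _ ≤ lpNorm p x := rpow_le_rpow (by positivity) (Finset.single_le_sum
        (f := fun i => |x i| ^ p) (fun i _ => by positivity) (Finset.mem_univ i)) (by positivity)

theorem map_eq_sum_single {n : ℕ} {M : Type*} [AddCommMonoid M] [Module ℝ M]
    (T : (Fin n → ℝ) →ₗ[ℝ] M) (x : Fin n → ℝ) : T x = ∑ a, x a • T (Pi.single a 1) := by
  conv_lhs => rw [← Finset.univ_sum_single x, map_sum]
  refine Finset.sum_congr rfl fun a _ => ?_
  rw [← map_smul, ← Pi.single_smul, smul_eq_mul, mul_one]

theorem abs_multilinear_le {n m : ℕ} (T : MultilinearMap ℝ (fun _ : Fin m => (Fin n → ℝ)) ℝ)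
    {y : Fin m → Fin n → ℝ} (hy : ∀ k i, |y k i| ≤ 1) :
    |T y| ≤ ∑ i : Fin m → Fin n, |T fun k => Pi.single (i k) 1| := by
  have hy' : y = fun k => ∑ i, y k i • (Pi.single i 1 : Fin n → ℝ) := by
    funext k
    conv_lhs => rw [← Finset.univ_sum_single (y k)]
    refine Finset.sum_congr rfl fun a _ => ?_
    rw [← Pi.single_smul, smul_eq_mul, mul_one]
  rw [hy', MultilinearMap.map_sum]
  refine (Finset.abs_sum_le_sum_abs _ _).trans (Finset.sum_le_sum fun i _ => ?_)
  rw [MultilinearMap.map_smul_univ, smul_eq_mul, abs_mul, Finset.abs_prod]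
  exact mul_le_of_le_one_left (abs_nonneg _)
    (Finset.prod_le_one (fun k _ => abs_nonneg _) fun k _ => hy k _)

theorem bddAbove_multiOpNorm {p : ℝ} (hp : 0 < p) {n m : ℕ}
    (T : (Fin n → ℝ) →ₗ[ℝ] MultilinearMap ℝ (fun _ : Fin m => (Fin n → ℝ)) ℝ) :
    BddAbove {c : ℝ | ∃ (x : Fin n → ℝ) (y : Fin m → (Fin n → ℝ)),
      lpNorm p x ≤ 1 ∧ (∀ k, linfNorm (y k) ≤ 1) ∧ c = |T x y|} := by
  refine ⟨∑ a, ∑ i : Fin m → Fin n, |T (Pi.single a 1) fun k => Pi.single (i k) 1|, ?_⟩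
  rintro c ⟨x, y, hx, hy, rfl⟩
  rw [map_eq_sum_single T x, sum_apply]
  refine (Finset.abs_sum_le_sum_abs _ _).trans (Finset.sum_le_sum fun a _ => ?_)
  rw [smul_apply, smul_eq_mul, abs_mul]
  refine (mul_le_of_le_one_left (abs_nonneg _) (abs_le_one_of_lpNorm_le hp hx a)).trans ?_
  exact abs_multilinear_le _ fun k i => abs_le_one_of_linfNorm_le (hy k) i

theorem Lp_le_multiOpNorm {p r : ℝ} (hpr : r.HolderConjugate p) {n m : ℕ}
    (T : (Fin n → ℝ) →ₗ[ℝ] MultilinearMap ℝ (fun _ : Fin m => (Fin n → ℝ)) ℝ)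
    {y : Fin m → Fin n → ℝ} (hy : ∀ k i, |y k i| ≤ 1) :
    (∑ a, |T (Pi.single a 1) y| ^ r) ^ (1 / r) ≤ multiOpNorm p T := by
  obtain ⟨g, hg, hgs⟩ := (NNReal.isGreatest_Lp (s := Finset.univ)
    (fun a => ‖T (Pi.single a 1) y‖₊) hpr).1
  have hp : 0 < p := hpr.symm.pos
  set x : Fin n → ℝ := fun a => SignType.sign (T (Pi.single a 1) y) * (g a : ℝ) with hx
  refine le_csSup (bddAbove_multiOpNorm hp T) ⟨x, y, ?_, fun k => Real.iSup_le (hy k) zero_le_one, ?_⟩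
  · refine rpow_le_one (by positivity) ?_ (by positivity)
    have h1 : ∑ a, (g a : ℝ) ^ p ≤ 1 := by exact_mod_cast hg
    refine le_trans (Finset.sum_le_sum fun a _ => rpow_le_rpow (abs_nonneg _) ?_ hp.le) h1
    rw [hx, abs_mul]
    refine (mul_le_of_le_one_left (abs_nonneg _) ?_).trans (le_of_eq (abs_of_nonneg (g a).2))
    rcases lt_trichotomy (T (Pi.single a 1) y) 0 with h | h | h <;> simp [h, sign_pos]
  · have h2 := congrArg NNReal.toReal hgs
    push_cast at h2
    simp only [norm_eq_abs] at h2
    rw [← h2, map_eq_sum_single T x, sum_apply, abs_of_nonneg]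
    · refine Finset.sum_congr rfl fun a _ => ?_
      rw [smul_apply, smul_eq_mul, hx, mul_right_comm, sign_mul_self]
    · refine Finset.sum_nonneg fun a _ => ?_
      rw [smul_apply, smul_eq_mul, hx, mul_right_comm, sign_mul_self]
      positivity

end Khintchine

/-- Multilinear mixed `(ℓ_{p/(p-1)}, ℓ₂)`-Littlewood inequality with constant
`(A_{p/(p-1)})^{M-1}`, for an `M`-linear form with `M = m + 1 ≥ 3`. -/
theorem multilinear_mixed_littlewood (m : ℕ) (hm : 2 ≤ m) (p : ℝ) (hp : 2 ≤ p) (n : ℕ)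
    (T : (Fin n → ℝ) →ₗ[ℝ] MultilinearMap ℝ (fun _ : Fin m => (Fin n → ℝ)) ℝ) :
    (∑ i₁ : Fin n, (∑ i : Fin m → Fin n,
        |T (Pi.single i₁ 1) (fun k => Pi.single (i k) 1)| ^ (2 : ℝ))
          ^ ((1 / 2) * (p / (p - 1)))) ^ ((p - 1) / p)
      ≤ khintchineA (p / (p - 1)) ^ m * multiOpNorm p T := by
  have hp1 : 0 < p - 1 := by linarith
  obtain ⟨r, hr⟩ : ∃ r, r = p / (p - 1) := ⟨_, rfl⟩
  have h1 : 1 < r := by rw [hr, lt_div_iff₀ hp1]; linarith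
  have h2 : r ≤ 2 := by rw [hr, div_le_iff₀ hp1]; linarith
  have hpr : r.HolderConjugate p := by
    rw [hr]; exact (Real.HolderConjugate.conjExponent (by linarith)).symm
  have hr0 : 0 < r := by linarith
  have hA := Khintchine.khintchineA_nonneg r hr0
  obtain ⟨y, hy, hle⟩ := Khintchine.exists_cube_sum_rpow_le h1 h2 m (ι := Unit)
    fun a _ => T (Pi.single a 1)
  simp only [Finset.univ_unique, Finset.sum_singleton] at hle
  rw [show (p - 1) / p = 1 / r by rw [hr, one_div_div], ← hr, one_div_mul_eq_div]
  simp only [rpow_two, sq_abs]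
  have e : ∀ t : ℝ, (t ^ 2) ^ (r / 2) = |t| ^ r := fun t => by
    rw [← sq_abs, ← rpow_two, ← rpow_mul (abs_nonneg t), mul_div_cancel₀ _ two_ne_zero]
  simp only [e] at hle
  refine (rpow_le_rpow (by positivity) hle (by positivity)).trans ?_
  rw [mul_rpow (by positivity) (by positivity)]
  have eA : ((khintchineA r ^ r) ^ m) ^ (1 / r) = khintchineA r ^ m := by
    rw [← rpow_natCast, ← rpow_natCast, ← rpow_mul hA, ← rpow_mul hA]
    congr 1
    field_simp
  rw [eA]
  exact mul_le_mul_of_nonneg_left (Khintchine.Lp_le_multiOpNorm hpr T hy) (by positivity)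
end
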